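/- arXiv:1909.10623 — 3 statements merged into one kernel-verified Lean document; each statement's English description precedes it below -/
import Mathlib

section
/- Let φ : S¹ → ℝ² be a continuous injective map from the circle into the plane, and let γ = range(φ) be the corresponding Jordan curve. Then the complement ℝ² ∖ γ has exactly two connected components: exactly one of them is bounded (the interior of γ) and exactly one of them is unbounded (the exterior of γ). -/
open Set Topology

theorem jct_eqOn_add_const {X : Type*} [TopologicalSpace X] {S : Set X} (hS : IsPreconnected S)
    {f g : X → ℂ} (hf : ContinuousOn f S) (hg : ContinuousOn g S)
    (h : ∀ x ∈ S, Complex.exp (f x) = Complex.exp (g x)) {a : X} (ha : a ∈ S) :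
    ∀ x ∈ S, f x = g x + (f a - g a) := by
  have hc : Complex.exp (f a - g a) = 1 := by
    rw [Complex.exp_sub, h a ha, div_self (Complex.exp_ne_zero _)]
  have := Complex.isCoveringMap_exp.eqOn_of_comp_eqOn (g₁ := f)
    (g₂ := fun x => g x + (f a - g a)) hS hf (hg.add continuousOn_const)
    (fun x hx => by
      apply Subtype.ext
      simp [Complex.exp_add, hc, h x hx]) ha (by simp)
  exact this

theorem jct_no_log_circle {c : ℂ} {n : ℤ} {g : ℝ → ℂ} (hg : Continuous g)
    (h : ∀ θ : ℝ, Complex.exp (g θ) = c * (Complex.exp (θ * Complex.I)) ^ n)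
    (hp : g (2 * Real.pi) = g 0) : n = 0 := by
  have hc : c = Complex.exp (g 0) := by simpa using (h 0).symm
  have := jct_eqOn_add_const (S := univ) isPreconnected_univ hg.continuousOn
    (g := fun θ : ℝ => n * (θ * Complex.I) + g 0) (by fun_prop)
    (fun θ _ => by
      rw [h θ, Complex.exp_add, ← hc, ← Complex.exp_int_mul, mul_comm]) (mem_univ 0)
    (2 * Real.pi) (mem_univ _)
  simp [hp] at this
  exact this

theorem jct_log {F : ℂ → ℂ} (hF : Continuous F) (h0 : ∀ z, F z ≠ 0) :
    ∃ f : ℂ → ℂ, Continuous f ∧ ∀ z, Complex.exp (f z) = F z := by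
  have : IsSimplyConnected (univ : Set ℂ) := by
    have : ContractibleSpace (univ : Set ℂ) :=
      (convex_univ (𝕜 := ℝ)).contractibleSpace ⟨0, mem_univ _⟩
    exact (inferInstance : SimplyConnectedSpace (univ : Set ℂ))
  obtain ⟨f, hf, hfe⟩ := Complex.exists_continuousOn_eqOn_exp_comp this isOpen_univ
    hF.continuousOn (by simpa using h0)
  exact ⟨f, continuousOn_univ.1 hf, fun z => hfe (mem_univ z)⟩

theorem jct_logR {F : ℝ → ℂ} (hF : Continuous F) (h0 : ∀ z, F z ≠ 0) :
    ∃ f : ℝ → ℂ, Continuous f ∧ ∀ z, Complex.exp (f z) = F z := by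
  obtain ⟨f, hf, hfe⟩ := jct_log (F := fun z => F z.re) (by fun_prop) (fun z => h0 _)
  exact ⟨fun x => f x, by fun_prop, fun x => by simpa using hfe x⟩

theorem jct_entire {F : ℂ → ℂ} (hF : Continuous F) (h0 : ∀ z, F z ≠ 0) {p : ℂ} {n : ℤ} {R : ℝ}
    (hR : ∀ z, R ≤ ‖z - p‖ → F z = (z - p) ^ n) : n = 0 := by
  obtain ⟨f, hf, hfe⟩ := jct_log hF h0
  let r : ℝ := max R 1
  have hr : 0 < r := lt_of_lt_of_le one_pos (le_max_right _ _)
  refine jct_no_log_circle (c := (r : ℂ) ^ n)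
    (g := fun θ : ℝ => f (p + r * Complex.exp (θ * Complex.I))) (by fun_prop) (fun θ => ?_) ?_
  · rw [hfe, hR]
    · simp [mul_zpow]
    · simp [Complex.norm_exp, abs_of_pos hr]
      exact le_max_left _ _
  · simp [Complex.exp_two_pi_mul_I]

theorem jct_frontier {K : Set ℂ} (hK : IsClosed K) (p : ℂ) :
    frontier (connectedComponentIn Kᶜ p) ⊆ K := by
  intro x hx
  by_contra hxK
  have hU : IsOpen (connectedComponentIn Kᶜ p) := hK.isOpen_compl.connectedComponentIn
  have hV : IsOpen (connectedComponentIn Kᶜ x) := hK.isOpen_compl.connectedComponentIn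
  have hxV := mem_connectedComponentIn (F := Kᶜ) hxK
  rw [hU.frontier_eq] at hx
  obtain ⟨y, hyV, hyU⟩ := mem_closure_iff.1 hx.1 _ hV hxV
  have := (connectedComponentIn_eq hyU).trans (connectedComponentIn_eq hyV).symm
  exact hx.2 (this ▸ hxV)

theorem jct_winding {K : Set ℂ} (hK : IsClosed K) {p : ℂ} (hp : p ∉ K)
    (hb : Bornology.IsBounded (connectedComponentIn Kᶜ p)) {G h : ℂ → ℂ} {n : ℤ}
    (hG : ContinuousOn G (closure (connectedComponentIn Kᶜ p)))
    (hG0 : ∀ z ∈ closure (connectedComponentIn Kᶜ p), G z ≠ 0)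
    (hh : ContinuousOn h K) (he : ∀ z ∈ K, Complex.exp (h z) = (z - p) ^ n * G z) : n = 0 := by
  classical
  set U := connectedComponentIn Kᶜ p with hUdef
  have hU : IsOpen U := hK.isOpen_compl.connectedComponentIn
  have hpU : p ∈ U := mem_connectedComponentIn (F := Kᶜ) hp
  obtain ⟨H, hH⟩ := ContinuousMap.exists_restrict_eq hK ⟨K.domRestrict h, hh.domRestrict⟩
  have hH' : ∀ z ∈ K, H z = h z := fun z hz => by
    have := congrArg (fun f => f ⟨z, hz⟩) hH
    exact this
  have hfr := jct_frontier hK p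
  obtain ⟨R, hR⟩ := hb.subset_ball p
  have hne : ∀ z, z ∉ U → z - p ≠ 0 := fun z hz h => hz (by rwa [sub_eq_zero.1 h])
  refine jct_entire (F := U.piecewise (fun z => Complex.exp (H z) / G z) (fun z => (z - p) ^ n))
    (p := p) (R := R) ?_ ?_ ?_
  · refine continuous_piecewise (fun a ha => ?_) ?_ ?_
    · rw [hH' a (hfr ha), he a (hfr ha), mul_div_assoc, div_self, mul_one]
      exact hG0 a (frontier_subset_closure ha)
    · exact ContinuousOn.div (by fun_prop) hG hG0
    · rw [hU.isClosed_compl.closure_eq]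
      exact ContinuousOn.zpow₀ (by fun_prop) n (fun z hz => Or.inl (hne z hz))
  · intro z
    by_cases hz : z ∈ U
    · simp only [hz, piecewise_eq_of_mem]
      exact div_ne_zero (Complex.exp_ne_zero _) (hG0 z (subset_closure hz))
    · simp only [hz, not_false_eq_true, piecewise_eq_of_notMem]
      exact zpow_ne_zero _ (hne z hz)
  · intro z hz
    apply piecewise_eq_of_notMem
    intro hzU
    have := hR hzU
    rw [Metric.mem_ball, dist_eq_norm] at this
    linarith

theorem jct_lift {ψ : Circle → ℂ} (hc : Continuous ψ) {p : ℂ} (hp : p ∉ range ψ) :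
    ∃ (g : ℝ → ℂ) (m : ℤ), Continuous g ∧ (∀ θ, Complex.exp (g θ) = ψ (Circle.exp θ) - p) ∧
      ∀ θ, g (θ + 2 * Real.pi) = g θ + m * (2 * Real.pi * Complex.I) := by
  obtain ⟨g, hg, hge⟩ := jct_logR (F := fun θ => ψ (Circle.exp θ) - p) (by fun_prop)
    (fun θ h => hp ⟨_, sub_eq_zero.1 h⟩)
  have h1 : ∀ θ, Complex.exp (g (θ + 2 * Real.pi)) = Complex.exp (g θ) := fun θ => by
    rw [hge, hge, Circle.exp_add_two_pi]
  obtain ⟨m, hm⟩ := Complex.exp_eq_exp_iff_exists_int.1 (h1 0)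
  refine ⟨g, m, hg, hge, fun θ => ?_⟩
  have := jct_eqOn_add_const (S := univ) isPreconnected_univ
    (f := fun θ => g (θ + 2 * Real.pi)) (g := g) (by fun_prop) (by fun_prop)
    (fun θ _ => h1 θ) (mem_univ 0) θ (mem_univ _)
  change g (θ + 2 * Real.pi) = _ + (g (0 + 2 * Real.pi) - g 0) at this
  rw [this, hm]; ring

theorem jct_descend {ψ : Circle → ℂ} (hc : Continuous ψ) (hi : Function.Injective ψ)
    {g : ℝ → ℂ} (hg : Continuous g) (hper : Function.Periodic g (2 * Real.pi)) :
    ∃ h : ℂ → ℂ, ContinuousOn h (range ψ) ∧ ∀ θ, h (ψ (Circle.exp θ)) = g θ := by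
  let e := AddCircle.homeomorphCircle'
  let G : Circle → ℂ := fun z => hper.lift (e.symm z)
  have hG : Continuous G := by
    have : Continuous (hper.lift : AddCircle (2 * Real.pi) → ℂ) := continuous_coinduced_dom.mpr hg
    exact this.comp e.symm.continuous
  have hGe : ∀ θ, G (Circle.exp θ) = g θ := fun θ => by
    have : Circle.exp θ = e (θ : AddCircle (2 * Real.pi)) := rfl
    simp only [G, this, Homeomorph.symm_apply_apply]
    exact hper.lift_coe θ
  have hemb : IsClosedEmbedding ψ := hc.isClosedEmbedding hi
  obtain ⟨H, hH⟩ := ContinuousMap.exists_extension' hemb ⟨G, hG⟩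
  refine ⟨H, H.continuous.continuousOn, fun θ => ?_⟩
  rw [← hGe]
  exact congrFun hH _

theorem jct_unique_bounded {ψ : Circle → ℂ} (hc : Continuous ψ) (hi : Function.Injective ψ)
    {p q : ℂ} (hp : p ∉ range ψ) (hq : q ∉ range ψ)
    (hbp : Bornology.IsBounded (connectedComponentIn (range ψ)ᶜ p))
    (hbq : Bornology.IsBounded (connectedComponentIn (range ψ)ᶜ q)) :
    connectedComponentIn (range ψ)ᶜ p = connectedComponentIn (range ψ)ᶜ q := by
  have hK : IsClosed (range ψ) := (isCompact_range hc).isClosed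
  have key : ∀ p ∉ range ψ, Bornology.IsBounded (connectedComponentIn (range ψ)ᶜ p) →
      ∀ (g : ℝ → ℂ), Continuous g → (∀ θ, Complex.exp (g θ) = ψ (Circle.exp θ) - p) →
      ¬ Function.Periodic g (2 * Real.pi) := by
    intro p hp hb g hg hge hper
    obtain ⟨h, hh, hhe⟩ := jct_descend hc hi hg hper
    have := jct_winding hK hp hb (G := fun _ => 1) (n := 1) continuousOn_const (by simp) hh
      (by
        rintro _ ⟨z, rfl⟩
        obtain ⟨θ, rfl⟩ := Circle.exp_surjective z
        simp [hhe, hge])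
    exact one_ne_zero this
  obtain ⟨g, m, hg, hge, hgm⟩ := jct_lift hc hp
  obtain ⟨g', m', hg', hge', hgm'⟩ := jct_lift hc hq
  have hm' : m' ≠ 0 := by
    rintro rfl
    exact key q hq hbq g' hg' hge' (fun θ => by simp [hgm'])
  by_contra hne
  have hqU : q ∉ closure (connectedComponentIn (range ψ)ᶜ p) := by
    intro h
    rw [closure_eq_self_union_frontier] at h
    rcases h with h | h
    · exact hne (connectedComponentIn_eq h)
    · exact hq (jct_frontier hK p h)
  have hqne : ∀ z ∈ closure (connectedComponentIn (range ψ)ᶜ p), z - q ≠ 0 := fun z hz h =>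
    hqU (by rwa [← sub_eq_zero.1 h])
  obtain ⟨h, hh, hhe⟩ := jct_descend hc hi (g := fun θ => m' * g θ - m * g' θ) (by fun_prop)
    (fun θ => by simp only [hgm, hgm']; ring)
  refine hm' (jct_winding hK hp hbp (G := fun z => (z - q) ^ (-m)) (n := m')
    (ContinuousOn.zpow₀ (by fun_prop) _ fun z hz => Or.inl (hqne z hz))
    (fun z hz => zpow_ne_zero _ (hqne z hz)) hh ?_)
  rintro _ ⟨z, rfl⟩
  obtain ⟨θ, rfl⟩ := Circle.exp_surjective z
  rw [hhe, Complex.exp_sub, Complex.exp_int_mul, Complex.exp_int_mul, hge, hge', zpow_neg,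
    div_eq_mul_inv]

theorem jct_arc (α : C(unitInterval, ℂ)) : ∃ L : ℂ → ℂ, ContinuousOn L (range α)ᶜ ∧
    ∀ z ∈ (range α)ᶜ, Complex.exp (L z) = (z - α 1) / (z - α 0) := by
  classical
  let A := {z : ℂ // z ∈ (range α)ᶜ}
  have hne : ∀ (z : A) t, (z : ℂ) - α t ≠ 0 := fun z t h => z.2 ⟨t, (sub_eq_zero.1 h).symm⟩
  let H : C(unitInterval × A, {z : ℂ // z ≠ 0}) :=
    ⟨fun x => ⟨((x.2 : ℂ) - α x.1) / ((x.2 : ℂ) - α 0),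
      div_ne_zero (hne _ _) (hne _ _)⟩, by
      have hv : Continuous fun x : unitInterval × A => (x.2 : ℂ) :=
        continuous_subtype_val.comp continuous_snd
      refine Continuous.subtype_mk (Continuous.div
        (hv.sub (α.continuous.comp continuous_fst)) (hv.sub continuous_const) ?_) _
      exact fun x => hne _ _⟩
  have H0 : ∀ a, H (0, a) = (⟨_, ((ContinuousMap.const A (0 : ℂ)) a).exp_ne_zero⟩ :
      {z : ℂ // z ≠ 0}) := fun a => by
    apply Subtype.ext
    simp [H, div_self (hne a 0)]
  let L := Complex.isCoveringMap_exp.liftHomotopy H (ContinuousMap.const A (0 : ℂ)) H0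
  have hL := Complex.isCoveringMap_exp.liftHomotopy_lifts H (ContinuousMap.const A (0 : ℂ)) H0
  refine ⟨fun z => if hz : z ∈ (range α)ᶜ then L (1, ⟨z, hz⟩) else 0, ?_, ?_⟩
  · rw [continuousOn_iff_continuous_domRestrict]
    have : Continuous fun a : A => L (1, a) := by fun_prop
    convert this using 1
    ext a
    have := a.2
    simp only [domRestrict_apply]
    rw [dif_pos this]
  · intro z hz
    have := congrArg Subtype.val (congrFun hL (1, ⟨z, hz⟩))
    simp only [dif_pos hz]
    exact this

theorem jct_no_log_pair {a b : ℂ} (hab : a ≠ b) {L : ℂ → ℂ} (hL : ContinuousOn L {a, b}ᶜ)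
    (he : ∀ z ∈ ({a, b}ᶜ : Set ℂ), Complex.exp (L z) = (z - a) / (z - b)) : False := by
  have hab' : a - b ≠ 0 := sub_ne_zero.2 hab
  have hr0 : 0 < ‖a - b‖ := norm_pos_iff.2 hab'
  set w : ℝ → ℂ := fun θ => (1 / 2 : ℝ) * Complex.exp (θ * Complex.I) with hw
  have hwn : ∀ θ, ‖w θ‖ = 1 / 2 := fun θ => by simp [hw, Complex.norm_exp]
  have hwc : Continuous w := by fun_prop
  have hw0 : ∀ θ, w θ ≠ 0 := fun θ h => by have := hwn θ; rw [h] at this; norm_num at this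
  have hsl : ∀ θ, 1 + w θ ∈ Complex.slitPlane := fun θ =>
    Complex.mem_slitPlane_of_norm_lt_one (by rw [hwn]; norm_num)
  have hmem : ∀ θ, a + (a - b) * w θ ∈ ({a, b}ᶜ : Set ℂ) := fun θ => by
    simp only [mem_compl_iff, mem_insert_iff, mem_singleton_iff, not_or]
    constructor
    · intro h
      exact mul_ne_zero hab' (hw0 θ) (by linear_combination h)
    · intro h
      exact mul_ne_zero hab' (Complex.slitPlane_ne_zero (hsl θ)) (by linear_combination h)
  have := jct_no_log_circle (c := (1 / 2 : ℝ)) (n := 1)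
    (g := fun θ => L (a + (a - b) * w θ) + Complex.log (1 + w θ))
    ((hL.comp_continuous (by fun_prop) hmem).add
      (Continuous.clog (by fun_prop) hsl))
    (fun θ => by
      rw [Complex.exp_add, Complex.exp_log (Complex.slitPlane_ne_zero (hsl θ)), he _ (hmem θ),
        zpow_one]
      have h1 := Complex.slitPlane_ne_zero (hsl θ)
      have e1 : a + (a - b) * w θ - b = (a - b) * (1 + w θ) := by ring
      rw [e1]
      change _ = w θ
      field_simp
      ring)
    (by simp [hw, Complex.exp_two_pi_mul_I])
  exact one_ne_zero this

theorem jct_separates {ψ : Circle → ℂ} (hc : Continuous ψ) (hi : Function.Injective ψ)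
    (hne : (range ψ)ᶜ.Nonempty) : ¬ IsPreconnected (range ψ)ᶜ := by
  classical
  intro hcon
  have h1 : (1 : Circle) ≠ -1 := by
    intro h
    have := congrArg (fun z : Circle => (z : ℂ).re) h
    norm_num at this
  set x : Circle := 1
  set y : Circle := -1
  let α₁ : C(unitInterval, ℂ) := ⟨fun t => ψ (Circle.path x y t), by fun_prop⟩
  let α₂ : C(unitInterval, ℂ) := ⟨fun t => ψ (Circle.path y x t), by fun_prop⟩
  have r₁ : range α₁ = ψ '' range (Circle.path x y) := by rw [← range_comp]; rfl
  have r₂ : range α₂ = ψ '' range (Circle.path y x) := by rw [← range_comp]; rfl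
  have hun : range α₁ ∪ range α₂ = range ψ := by
    rw [r₁, r₂, ← image_union, Circle.range_path_union_range_path h1, image_univ]
  have hint : range α₁ ∩ range α₂ = {ψ x, ψ y} := by
    rw [r₁, r₂, ← image_inter hi, Circle.range_path_inter_range_path h1, image_pair]
  obtain ⟨L₁, hL₁, he₁⟩ := jct_arc α₁
  obtain ⟨L₂, hL₂, he₂⟩ := jct_arc α₂
  have e₁ : ∀ z ∈ (range α₁)ᶜ, Complex.exp (L₁ z) = (z - ψ y) / (z - ψ x) := fun z hz => by
    simpa [α₁] using he₁ z hz
  have e₂ : ∀ z ∈ (range α₂)ᶜ, Complex.exp (-L₂ z) = (z - ψ y) / (z - ψ x) := fun z hz => by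
    rw [Complex.exp_neg, he₂ z hz]
    simp [α₂]
  have hs₁ : (range ψ)ᶜ ⊆ (range α₁)ᶜ := compl_subset_compl.2 (hun ▸ subset_union_left)
  have hs₂ : (range ψ)ᶜ ⊆ (range α₂)ᶜ := compl_subset_compl.2 (hun ▸ subset_union_right)
  obtain ⟨o, ho⟩ := hne
  have heq := jct_eqOn_add_const hcon (hL₁.mono hs₁) (hL₂.mono hs₂).neg
    (fun z hz => (e₁ z (hs₁ hz)).trans (e₂ z (hs₂ hz)).symm) ho
  set c := L₁ o - (-L₂) o with hcdef
  have hc1 : Complex.exp c = 1 := by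
    rw [hcdef, Complex.exp_sub, e₁ o (hs₁ ho), Pi.neg_apply, e₂ o (hs₂ ho), div_self]
    rw [← e₂ o (hs₂ ho)]
    exact Complex.exp_ne_zero _
  have ho₁ : IsOpen (range α₁)ᶜ := (isCompact_range α₁.continuous).isClosed.isOpen_compl
  have ho₂ : IsOpen (range α₂)ᶜ := (isCompact_range α₂.continuous).isClosed.isOpen_compl
  let L : ℂ → ℂ := fun z => if z ∈ range α₁ then -L₂ z + c else L₁ z
  have hLe₁ : EqOn L L₁ (range α₁)ᶜ := fun z hz => if_neg hz
  have hLe₂ : EqOn L (fun z => -L₂ z + c) (range α₂)ᶜ := fun z hz => by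
    by_cases h : z ∈ range α₁
    · exact if_pos h
    · rw [hLe₁ h]
      exact heq z (by rw [← hun, compl_union]; exact ⟨h, hz⟩)
  have hcov : ({ψ y, ψ x}ᶜ : Set ℂ) = (range α₁)ᶜ ∪ (range α₂)ᶜ := by
    rw [← compl_inter, hint, pair_comm]
  refine jct_no_log_pair (a := ψ y) (b := ψ x) (fun h => h1 (hi h).symm) (L := L) ?_ ?_
  · rw [hcov]
    exact (hL₁.congr hLe₁).union_of_isOpen
      ((hL₂.neg.add continuousOn_const).congr hLe₂) ho₁ ho₂
  · rw [hcov]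
    rintro z (hz | hz)
    · rw [hLe₁ hz, e₁ z hz]
    · rw [hLe₂ hz, Complex.exp_add, e₂ z hz, hc1, mul_one]

theorem jct_compl_ball {R : ℝ} (hR : 0 < R) : IsPreconnected {z : ℂ | R < ‖z‖} := by
  have : {z : ℂ | R < ‖z‖} = Complex.exp '' {w | Real.log R < w.re} := by
    ext z
    simp only [mem_ofPred_eq, mem_image]
    constructor
    · intro h
      have hz : z ≠ 0 := by rintro rfl; simp at h; linarith
      refine ⟨Complex.log z, ?_, Complex.exp_log hz⟩
      rw [Complex.log_re]
      exact Real.log_lt_log hR h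
    · rintro ⟨w, hw, rfl⟩
      rw [Complex.norm_exp]
      exact (Real.log_lt_iff_lt_exp hR).1 hw
  rw [this]
  exact (convex_halfSpace_re_gt _).isPreconnected.image _ Complex.continuous_exp.continuousOn

theorem jct_complex {ψ : Circle → ℂ} (hc : Continuous ψ) (hi : Function.Injective ψ) :
    ∃ p ∈ (range ψ)ᶜ, ∃ q ∈ (range ψ)ᶜ,
      Bornology.IsBounded (connectedComponentIn (range ψ)ᶜ p) ∧
      ¬ Bornology.IsBounded (connectedComponentIn (range ψ)ᶜ q) ∧
      ∀ z ∈ (range ψ)ᶜ, connectedComponentIn (range ψ)ᶜ z = connectedComponentIn (range ψ)ᶜ p ∨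
        connectedComponentIn (range ψ)ᶜ z = connectedComponentIn (range ψ)ᶜ q := by
  obtain ⟨R, hR0, hR⟩ := (isCompact_range hc).isBounded.subset_ball_lt 0 0
  have hV : {z : ℂ | R < ‖z‖} ⊆ (range ψ)ᶜ := fun z hz h => by
    have := hR h
    simp at this hz
    linarith
  let q : ℂ := (R + 1 : ℝ)
  have hqV : q ∈ {z : ℂ | R < ‖z‖} := by
    simp only [q, mem_ofPred_eq, Complex.norm_real, Real.norm_eq_abs]
    rw [abs_of_pos (by linarith)]; linarith
  have hVq : {z : ℂ | R < ‖z‖} ⊆ connectedComponentIn (range ψ)ᶜ q :=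
    (jct_compl_ball hR0).subset_connectedComponentIn hqV hV
  have hunb : ∀ z, ¬ Bornology.IsBounded (connectedComponentIn (range ψ)ᶜ z) →
      connectedComponentIn (range ψ)ᶜ z = connectedComponentIn (range ψ)ᶜ q := by
    intro z hz
    by_contra hne
    apply hz
    refine (Metric.isBounded_closedBall (x := (0 : ℂ)) (r := R)).subset fun w hw => ?_
    by_contra hwR
    have hw' : w ∈ {z : ℂ | R < ‖z‖} := by simpa using hwR
    exact hne ((connectedComponentIn_eq hw).trans (connectedComponentIn_eq (hVq hw')).symm)
  have hqunb : ¬ Bornology.IsBounded (connectedComponentIn (range ψ)ᶜ q) := by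
    intro h
    obtain ⟨r, hr⟩ := (h.subset hVq).subset_closedBall 0
    have hm : ((max R r + 1 : ℝ) : ℂ) ∈ {z : ℂ | R < ‖z‖} := by
      simp only [mem_ofPred_eq, Complex.norm_real, Real.norm_eq_abs]
      have := le_max_left R r
      exact lt_of_lt_of_le (by linarith) (le_abs_self _)
    have := hr hm
    simp only [Metric.mem_closedBall, dist_zero_right, Complex.norm_real, Real.norm_eq_abs] at this
    have h2 := le_max_right R r
    have h3 := le_abs_self (max R r + 1)
    linarith
  have hex : ∃ p ∈ (range ψ)ᶜ, Bornology.IsBounded (connectedComponentIn (range ψ)ᶜ p) := by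
    by_contra hno
    push Not at hno
    apply jct_separates hc hi ⟨q, hV hqV⟩
    have : (range ψ)ᶜ = connectedComponentIn (range ψ)ᶜ q := by
      refine Subset.antisymm (fun z hz => ?_) (connectedComponentIn_subset _ _)
      rw [← hunb z (hno z hz)]
      exact mem_connectedComponentIn hz
    rw [this]
    exact isPreconnected_connectedComponentIn
  obtain ⟨p, hp, hpb⟩ := hex
  refine ⟨p, hp, q, hV hqV, hpb, hqunb, fun z hz => ?_⟩
  by_cases hb : Bornology.IsBounded (connectedComponentIn (range ψ)ᶜ z)
  · exact Or.inl (jct_unique_bounded hc hi hz hp hb hpb)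
  · exact Or.inr (hunb z hb)

theorem jordan_curve_two_components
    (φ : (Metric.sphere (0 : EuclideanSpace ℝ (Fin 2)) 1 : Set (EuclideanSpace ℝ (Fin 2))) →
        EuclideanSpace ℝ (Fin 2))
    (hφc : Continuous φ) (hφi : Function.Injective φ)
    (γ : Set (EuclideanSpace ℝ (Fin 2))) (hγ : γ = Set.range φ) :
    ∃ C₁ C₂ : Set (EuclideanSpace ℝ (Fin 2)),
      C₁ ≠ C₂ ∧
      {C | ∃ x ∈ γᶜ, C = connectedComponentIn γᶜ x} = {C₁, C₂} ∧
      Bornology.IsBounded C₁ ∧ ¬ Bornology.IsBounded C₂ := by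
  let e : ℂ ≃ₗᵢ[ℝ] EuclideanSpace ℝ (Fin 2) := Complex.orthonormalBasisOneI.repr
  let s : Circle → Metric.sphere (0 : EuclideanSpace ℝ (Fin 2)) 1 := fun z =>
    ⟨e z, by simpa using z.norm_coe⟩
  have hs : Continuous s := Continuous.subtype_mk (by fun_prop) _
  have hsi : Function.Injective s := fun z w h => by
    have : e z = e w := congrArg Subtype.val h
    exact Circle.ext (e.injective this)
  have hss : Function.Surjective s := fun x => by
    refine ⟨⟨e.symm x, ?_⟩, ?_⟩
    · simp [Submonoid.unitSphere]
    · apply Subtype.ext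
      exact e.apply_symm_apply _
  let ψ : Circle → ℂ := fun z => e.symm (φ (s z))
  have hψ : Continuous ψ := by fun_prop
  have hψi : Function.Injective ψ := e.symm.injective.comp (hφi.comp hsi)
  have hr : e.toHomeomorph '' (range ψ)ᶜ = γᶜ := by
    rw [image_compl_eq e.toHomeomorph.bijective, ← range_comp, hγ, ← hss.range_comp φ]
    congr 2
    ext1 z
    exact e.apply_symm_apply _
  have hcomp : ∀ z ∈ (range ψ)ᶜ,
      connectedComponentIn γᶜ (e z) = e '' connectedComponentIn (range ψ)ᶜ z := fun z hz => by
    rw [← hr]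
    exact (e.toHomeomorph.image_connectedComponentIn hz).symm
  have hbd : ∀ S : Set ℂ, Bornology.IsBounded (e '' S) ↔ Bornology.IsBounded S := fun S => by
    constructor
    · intro h
      have := e.symm.lipschitz.isBounded_image h
      rwa [← image_comp, show (e.symm ∘ e : ℂ → ℂ) = id from funext e.symm_apply_apply,
        image_id] at this
    · exact fun h => e.lipschitz.isBounded_image h
  obtain ⟨p, hp, q, hq, hpb, hqb, hall⟩ := jct_complex hψ hψi
  have hmem : ∀ z ∈ (range ψ)ᶜ, e z ∈ γᶜ := fun z hz => hr ▸ mem_image_of_mem _ hz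
  rw [← hbd, ← hcomp p hp] at hpb
  rw [← hbd, ← hcomp q hq] at hqb
  refine ⟨connectedComponentIn γᶜ (e p), connectedComponentIn γᶜ (e q), ?_, ?_, hpb, hqb⟩
  · intro h
    exact hqb (h ▸ hpb)
  · ext C
    simp only [mem_ofPred_eq, mem_insert_iff, mem_singleton_iff]
    constructor
    · rintro ⟨x, hx, rfl⟩
      rw [← hr] at hx
      obtain ⟨z, hz, rfl⟩ := hx
      change connectedComponentIn γᶜ (e z) = _ ∨ connectedComponentIn γᶜ (e z) = _
      rw [hcomp z hz, hcomp p hp, hcomp q hq]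
      exact (hall z hz).imp (congrArg _) (congrArg _)
    · rintro (rfl | rfl)
      · exact ⟨_, hmem p hp, rfl⟩
      · exact ⟨_, hmem q hq, rfl⟩
end

section
/- Let γ₁, …, γ_m be m distinct Jordan curves in ℝ² such that at most one pair of them is semi-disjoint (intersecting in exactly one point) and all the other pairs are disjoint, and let Γ = γ₁ ∪ ⋯ ∪ γ_m. Then the complement ℝ² ∖ Γ has exactly m+1 connected components, of which exactly one is unbounded and the remaining m are bounded. -/
namespace JCF
open Set Metric Complex Topology

lemma log_lift {X : Type*} [TopologicalSpace X] [SimplyConnectedSpace X]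
    [LocallyPathConnectedSpace X] (f : X → ℂ) (hf : Continuous f) (h0 : ∀ x, f x ≠ 0) :
    ∃ g : X → ℂ, Continuous g ∧ ∀ x, exp (g x) = f x := by
  obtain ⟨a₀⟩ : Nonempty X := inferInstance
  obtain ⟨F, ⟨-, hF⟩, -⟩ := Complex.isCoveringMapOn_exp.existsUnique_continuousMap_lifts
    (⟨f, hf⟩ : C(X, ℂ)) (a₀ := a₀) (e₀ := log (f a₀)) (by simp [exp_log (h0 a₀)])
    (fun a => by simpa using h0 a)
  exact ⟨F, F.continuous, fun x => congr_fun hF x⟩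

lemma const_of_exp {X : Type*} [TopologicalSpace X] {S : Set X} (hS : IsPreconnected S)
    (u : X → ℂ) (hu : ContinuousOn u S) (h : ∀ z ∈ S, exp (u z) = 1) :
    ∀ x ∈ S, ∀ y ∈ S, u x = u y := by
  intro x hx y hy
  have hd : DiscreteTopology (AddSubgroup.zmultiples (2 * Real.pi * I) : Set ℂ) :=
    NormedSpace.discreteTopology_zmultiples _
  refine hS.constant_of_mapsTo (T := (AddSubgroup.zmultiples (2 * Real.pi * I) : Set ℂ)) ⟨hd⟩ hu ?_ hx hy
  intro z hz
  obtain ⟨n, hn⟩ := exp_eq_one_iff.1 (h z hz)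
  exact AddSubgroup.mem_zmultiples_iff.2 ⟨n, by rw [hn]; simp⟩

lemma no_log_circle (a : ℂ) (r : ℝ) (hr : 0 < r) (k : ℤ) (hk : k ≠ 0) (g : ℂ → ℂ)
    (hg : ContinuousOn g (sphere a r)) (h : ∀ z ∈ sphere a r, exp (g z) = (z - a) ^ k) : False := by
  have hm : ∀ t : ℝ, circleMap a r t ∈ sphere a r := fun t => circleMap_mem_sphere a hr.le t
  have hc : Continuous (fun t : ℝ => g (circleMap a r t) - k * (Real.log r + t * I)) := by
    refine Continuous.sub (hg.comp_continuous (continuous_circleMap a r) hm) (by fun_prop)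
  have := const_of_exp (X := ℝ) isPreconnected_univ _ hc.continuousOn (fun t _ => by
    rw [exp_sub, h _ (hm t), exp_int_mul, exp_add, ← ofReal_exp, Real.exp_log hr]
    simp only [circleMap, add_sub_cancel_left]
    exact div_self (zpow_ne_zero _ (mul_ne_zero (by exact_mod_cast hr.ne') (exp_ne_zero _)))) 0 trivial
      (2 * Real.pi) trivial
  simp [circleMap] at this
  exact hk this

lemma isPreconnected_compl_closedBall (R : ℝ) (hR : 0 < R) :
    IsPreconnected ((closedBall (0 : ℂ) R)ᶜ) := by
  have h1 : IsPreconnected {w : ℂ | Real.log R < w.re} :=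
    (convex_halfSpace_re_gt _).isPreconnected
  have h2 := h1.image exp continuous_exp.continuousOn
  convert h2 using 1
  ext z
  simp only [mem_compl_iff, mem_closedBall, dist_zero_right, not_le, mem_image, mem_ofPred_eq]
  constructor
  · intro hz
    have : z ≠ 0 := by rintro rfl; simp at hz; linarith
    exact ⟨log z, by rw [log_re]; exact Real.log_lt_log hR hz, exp_log this⟩
  · rintro ⟨w, hw, rfl⟩
    rw [norm_exp]
    exact (Real.log_lt_iff_lt_exp hR).1 hw

/-- log of `(z - c 0)/(z - c 1)` off the path `c`. -/
lemma log_off_path (c : ℝ → ℂ) (hc : Continuous c) :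
    ∃ g : ℂ → ℂ, ContinuousOn g (c '' Icc 0 1)ᶜ ∧
      ∀ z ∈ (c '' Icc 0 1)ᶜ, exp (g z) = (z - c 0) / (z - c 1) := by
  classical
  set S := (c '' Icc 0 1)ᶜ with hS
  have hne : ∀ (t : unitInterval) (z : S), (z : ℂ) - c (1 - t) ≠ 0 := by
    intro t z h
    refine z.2 ⟨1 - t, ⟨by linarith [t.2.2], by linarith [t.2.1]⟩, (sub_eq_zero.1 h).symm⟩
  have hne1 : ∀ z : S, (z : ℂ) - c 1 ≠ 0 := fun z => by simpa using hne 0 z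
  let H : C(unitInterval × S, {z : ℂ // z ≠ 0}) :=
    ⟨fun p => ⟨((p.2 : ℂ) - c (1 - p.1)) / ((p.2 : ℂ) - c 1), div_ne_zero (hne _ _) (hne1 _)⟩, by
      refine Continuous.subtype_mk (Continuous.div (by fun_prop) (by fun_prop) (fun p => hne1 _)) _⟩
  have H0 : ∀ a, H (0, a) = (fun z : ℂ ↦ (⟨_, z.exp_ne_zero⟩ : {z : ℂ // z ≠ 0}))
      ((ContinuousMap.const S (0 : ℂ)) a) := by
    intro a
    apply Subtype.ext
    simp [H, div_self (hne1 a)]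
  let L := Complex.isCoveringMap_exp.liftHomotopy H (ContinuousMap.const S 0) H0
  have hL : ∀ p, exp (L p) = (H p : ℂ) := fun p =>
    congr_arg Subtype.val (congr_fun (Complex.isCoveringMap_exp.liftHomotopy_lifts H _ H0) p)
  refine ⟨fun z => if h : z ∈ S then L (1, ⟨z, h⟩) else 0, ?_, ?_⟩
  · rw [continuousOn_iff_continuous_domRestrict]
    have : S.domRestrict (fun z => if h : z ∈ S then L (1, ⟨z, h⟩) else 0) = fun z : S => L (1, z) := by
      ext z; simp
    rw [this]; fun_prop
  · intro z hz
    simp only [hz, dite_true, hL]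
    simp [H]

/-- Parametrised Jordan curve in `ℂ`. -/
def IsJ (γ : Set ℂ) : Prop :=
  ∃ e : ℝ → ℂ, Continuous e ∧ (∀ s t, e s = e t ↔ ∃ n : ℤ, s - t = n) ∧ range e = γ

lemma IsJ.shift {γ : Set ℂ} (h : IsJ γ) {a : ℂ} (ha : a ∈ γ) :
    ∃ e : ℝ → ℂ, Continuous e ∧ (∀ s t, e s = e t ↔ ∃ n : ℤ, s - t = n) ∧ range e = γ ∧ e 0 = a := by
  obtain ⟨e, hc, hi, rfl⟩ := h
  obtain ⟨t0, rfl⟩ := ha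
  refine ⟨fun t => e (t + t0), by fun_prop, fun s t => by simp [hi], ?_, by simp⟩
  ext z
  constructor
  · rintro ⟨t, rfl⟩; exact ⟨_, rfl⟩
  · rintro ⟨t, rfl⟩; exact ⟨t - t0, by simp⟩

lemma range_eq_Icc {e : ℝ → ℂ} (hi : ∀ s t, e s = e t ↔ ∃ n : ℤ, s - t = n) :
    range e = e '' Icc 0 1 := by
  ext z
  constructor
  · rintro ⟨t, rfl⟩
    exact ⟨Int.fract t, ⟨Int.fract_nonneg t, (Int.fract_lt_one t).le⟩,
      (hi _ _).2 ⟨-⌊t⌋, by rw [Int.fract]; push_cast; ring⟩⟩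
  · rintro ⟨t, -, rfl⟩; exact ⟨t, rfl⟩

lemma IsJ.isCompact {γ : Set ℂ} (h : IsJ γ) : IsCompact γ := by
  obtain ⟨e, hc, hi, rfl⟩ := h
  rw [range_eq_Icc hi]
  exact isCompact_Icc.image hc

lemma IsJ.infinite {γ : Set ℂ} (h : IsJ γ) : γ.Infinite := by
  obtain ⟨e, hc, hi, rfl⟩ := h
  have : InjOn e (Ico 0 1) := by
    intro s hs t ht hst
    obtain ⟨n, hn⟩ := (hi s t).1 hst
    have h1 : (n : ℝ) < 1 := by linarith [hs.2, ht.1]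
    have h2 : (-1 : ℝ) < n := by linarith [hs.1, ht.2]
    have h1' : n < 1 := by exact_mod_cast h1
    have h2' : -1 < n := by exact_mod_cast h2
    have : n = 0 := by omega
    subst this
    simp at hn; linarith
  exact ((Ico_infinite (zero_lt_one (α := ℝ))).image this).mono (image_subset_range _ _)

lemma jordan_sep {γ : Set ℂ} (h : IsJ γ) {a : ℂ} (ha : a ∈ γ) :
    ∃ w : ℂ → ℂ, (∀ S ⊆ γᶜ, IsPreconnected S → ∀ x ∈ S, ∀ y ∈ S, w x = w y) ∧
      ∀ r > 0, ∀ c, ¬ ∀ z ∈ ball a r \ γ, w z = c := by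
  obtain ⟨e, hc, hi, rfl, rfl⟩ := h.shift ha
  set A := (fun t : ℝ => e (t / 2)) '' Icc 0 1 with hA
  set B := (fun t : ℝ => e (1 - t / 2)) '' Icc 0 1 with hB
  have hAB : range e = A ∪ B := by
    rw [range_eq_Icc hi]
    ext z
    constructor
    · rintro ⟨t, ht, rfl⟩
      rcases le_total t (1 / 2) with h | h
      · exact Or.inl ⟨2 * t, ⟨by linarith [ht.1], by linarith⟩, by simp⟩
      · exact Or.inr ⟨2 * (1 - t), ⟨by linarith [ht.2], by linarith⟩, by simp⟩
    · rintro (⟨t, ht, rfl⟩ | ⟨t, ht, rfl⟩)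
      · exact ⟨t / 2, ⟨by linarith [ht.1], by linarith [ht.2]⟩, rfl⟩
      · exact ⟨1 - t / 2, ⟨by linarith [ht.2], by linarith [ht.1]⟩, rfl⟩
  have hAc : IsClosed A := (isCompact_Icc.image (by fun_prop)).isClosed
  have hBc : IsClosed B := (isCompact_Icc.image (by fun_prop)).isClosed
  have hABi : ∀ z ∈ A, z ∈ B → z = e 0 ∨ z = e (1 / 2) := by
    rintro _ ⟨t, ht, rfl⟩ ⟨s, hs, hst⟩
    obtain ⟨n, hn⟩ := (hi _ _).1 hst
    have h1 : (-1 : ℝ) < n := by linarith [ht.1, ht.2, hs.1, hs.2]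
    have h2 : (n : ℝ) < 2 := by linarith [ht.1, ht.2, hs.1, hs.2]
    have h1' : -1 < n := by exact_mod_cast h1
    have h2' : n < 2 := by exact_mod_cast h2
    have : n = 0 ∨ n = 1 := by omega
    rcases this with rfl | rfl
    · right; simp at hn; simp only; congr 1; linarith [ht.1, ht.2, hs.1, hs.2]
    · left; simp at hn; simp only; congr 1; linarith [ht.1, ht.2, hs.1, hs.2]
  have hab : e (1 / 2) ≠ e 0 := by
    intro h
    obtain ⟨n, hn⟩ := (hi _ _).1 h
    have h1 : (0 : ℝ) < n := by linarith
    have h2 : (n : ℝ) < 1 := by linarith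
    have h1' : 0 < n := by exact_mod_cast h1
    have h2' : n < 1 := by exact_mod_cast h2
    omega
  have e1 : e 1 = e 0 := (hi _ _).2 ⟨1, by simp⟩
  set a := e 0
  set b := e (1 / 2)
  obtain ⟨gA, gAc, gAe⟩ := log_off_path (fun t : ℝ => e (t / 2)) (by fun_prop)
  obtain ⟨gB, gBc, gBe⟩ := log_off_path (fun t : ℝ => e (1 - t / 2)) (by fun_prop)
  rw [← hA] at gAc gAe
  rw [← hB] at gBc gBe
  have gAe' : ∀ z ∉ A, exp (gA z) = (z - a) / (z - b) := by
    intro z hz; rw [gAe z hz]; simp [a, b]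
  have gBe' : ∀ z ∉ B, exp (gB z) = (z - a) / (z - b) := by
    intro z hz; rw [gBe z hz]; norm_num [e1, b]
  have haA : a ∈ A := ⟨0, by simp, by simp [a]⟩
  have hbA : b ∈ A := ⟨1, by simp, by simp [b]⟩
  have hex : ∀ z, z ∉ A → z ∉ B → exp (gA z - gB z) = 1 := by
    intro z hzA hzB
    rw [exp_sub, gAe' z hzA, gBe' z hzB]
    refine div_self (div_ne_zero ?_ ?_) <;> rw [sub_ne_zero] <;> rintro rfl
    · exact hzA haA
    · exact hzA hbA
  refine ⟨fun z => gA z - gB z, ?_, ?_⟩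
  · intro S hS hSc
    rw [hAB] at hS
    have hSA : S ⊆ Aᶜ := fun z hz h => hS hz (Or.inl h)
    have hSB : S ⊆ Bᶜ := fun z hz h => hS hz (Or.inr h)
    exact const_of_exp hSc _ ((gAc.mono hSA).sub (gBc.mono hSB))
      (fun z hz => hex z (hSA hz) (hSB hz))
  · intro r hr c hcst
    set ρ := min r (dist a b) with hρ
    have hρ0 : 0 < ρ := lt_min hr (dist_pos.2 hab.symm)
    obtain ⟨c', hc', hc1⟩ : ∃ c' : ℂ, exp c' = 1 ∧
        ∀ z ∈ ball a ρ, z ∉ A → z ∉ B → gA z = gB z + c' := by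
      by_cases hE : ∃ z ∈ ball a ρ, z ∉ A ∧ z ∉ B
      · obtain ⟨z, hz, hzA, hzB⟩ := hE
        have hall : ∀ z ∈ ball a ρ, z ∉ A → z ∉ B → gA z - gB z = c := fun z hz hzA hzB =>
          hcst z ⟨ball_subset_ball (min_le_left _ _) hz, by rw [hAB]; simp [hzA, hzB]⟩
        refine ⟨c, by rw [← hall z hz hzA hzB]; exact hex z hzA hzB, fun z hz hzA hzB => ?_⟩
        rw [← hall z hz hzA hzB]; ring
      · push Not at hE
        exact ⟨0, by simp, fun z hz hzA hzB => absurd (hE z hz hzA) hzB⟩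
    classical
    let g : ℂ → ℂ := fun z => if z ∈ A then gB z + c' else gA z
    have hbD : ∀ z ∈ ball a ρ, z ≠ b := by
      rintro z hz rfl
      have := mem_ball'.1 hz
      exact absurd (min_le_right r (dist a b)) (not_le.2 this)
    have hzz : ∀ z ∈ ball a ρ, z ≠ a → z ∈ A → z ∉ B := by
      intro z hz hza hzA hzB
      rcases hABi z hzA hzB with h | h
      · exact hza h
      · exact hbD z hz h
    have hge : ∀ z ∈ ball a ρ, z ≠ a → exp (g z) = (z - a) / (z - b) := by
      intro z hz hza
      by_cases hzA : z ∈ A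
      · simp only [g, hzA, if_true, exp_add, hc', mul_one]
        exact gBe' z (hzz z hz hza hzA)
      · simp only [g, hzA, if_false]; exact gAe' z hzA
    have hgc : ∀ z ∈ ball a ρ, z ≠ a → ContinuousAt g z := by
      intro z hz hza
      by_cases hzA : z ∈ A
      · have hzB := hzz z hz hza hzA
        have hcB : ContinuousAt (fun z => gB z + c') z :=
          (gBc.continuousAt (hBc.isOpen_compl.mem_nhds hzB)).add continuousAt_const
        refine hcB.congr ?_
        filter_upwards [hBc.isOpen_compl.mem_nhds hzB, isOpen_ball.mem_nhds hz] with y hy hy2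
        by_cases hyA : y ∈ A
        · simp [g, hyA]
        · simp only [g, hyA, if_false]; exact (hc1 y hy2 hyA hy).symm
      · refine (gAc.continuousAt (hAc.isOpen_compl.mem_nhds hzA)).congr ?_
        filter_upwards [hAc.isOpen_compl.mem_nhds hzA] with y hy
        simp only [g, if_neg hy]
    have habn : a - b ≠ 0 := sub_ne_zero.2 hab.symm
    have hsl : ∀ z ∈ ball a ρ, (z - b) / (a - b) ∈ slitPlane := by
      intro z hz
      have : (z - b) / (a - b) ∈ ball (1 : ℂ) 1 := by
        rw [mem_ball, dist_eq_norm]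
        have : (z - b) / (a - b) - 1 = (z - a) / (a - b) := by field_simp; ring
        rw [this, norm_div, div_lt_one (norm_pos_iff.2 habn), ← dist_eq_norm, ← dist_eq_norm]
        exact lt_of_lt_of_le (mem_ball.1 hz) (min_le_right _ _)
      exact ball_one_subset_slitPlane this
    have hsub : ∀ z ∈ sphere a (ρ / 2), z ∈ ball a ρ ∧ z ≠ a := by
      intro z hz
      rw [mem_sphere] at hz
      refine ⟨by rw [mem_ball]; linarith, ?_⟩
      rintro rfl
      simp at hz; linarith
    refine no_log_circle a (ρ / 2) (by linarith) 1 one_ne_zero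
      (fun z => g z + log ((z - b) / (a - b)) + log (a - b)) ?_ ?_
    · intro z hz
      obtain ⟨h1, h2⟩ := hsub z hz
      refine ContinuousAt.continuousWithinAt ?_
      refine ((hgc z h1 h2).add (ContinuousAt.clog ?_ (hsl z h1))).add continuousAt_const
      fun_prop
    · intro z hz
      obtain ⟨h1, h2⟩ := hsub z hz
      have hzb : z - b ≠ 0 := sub_ne_zero.2 (hbD z h1)
      rw [exp_add, exp_add, hge z h1 h2, exp_log (slitPlane_ne_zero (hsl z h1)), exp_log habn]
      field_simp

lemma indep {ι : Type} [Fintype ι] [DecidableEq ι] {K : Set ℂ} (hK : IsCompact K) (p : ι → ℂ)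
    (hp : ∀ i, p i ∉ K)
    (hne : ∀ i j, i ≠ j → connectedComponentIn Kᶜ (p i) ≠ connectedComponentIn Kᶜ (p j))
    (hb : ∀ i, Bornology.IsBounded (connectedComponentIn Kᶜ (p i))) (k : ι → ℤ) (g : ℂ → ℂ)
    (hg : ContinuousOn g K) (hge : ∀ z ∈ K, exp (g z) = ∏ i, (z - p i) ^ k i) : k = 0 := by
  classical
  funext i0
  by_contra hk
  have hk : k i0 ≠ 0 := hk
  set U := connectedComponentIn Kᶜ (p i0) with hU
  have hUo : IsOpen U := hK.isClosed.isOpen_compl.connectedComponentIn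
  have hUK : ∀ z ∈ U, z ∉ K := fun z hz => connectedComponentIn_subset _ _ hz
  have hUcl : ∀ z ∈ closure U, z ∉ U → z ∈ K := by
    intro z hz hzU
    by_contra hzK
    have ho : IsOpen (connectedComponentIn Kᶜ z) := hK.isClosed.isOpen_compl.connectedComponentIn
    obtain ⟨y, hy1, hy2⟩ := mem_closure_iff.1 hz _ ho (mem_connectedComponentIn hzK)
    apply hzU
    rw [hU, connectedComponentIn_eq hy2, ← connectedComponentIn_eq hy1]
    exact mem_connectedComponentIn hzK
  have hpj : ∀ j, j ≠ i0 → p j ∉ closure U := by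
    intro j hj hjU
    by_cases h : p j ∈ U
    · exact hne i0 j hj.symm (connectedComponentIn_eq h)
    · exact hp j (hUcl _ hjU h)
  obtain ⟨G, hG⟩ := ContinuousMap.exists_restrict_eq hK.isClosed
    (⟨fun z : K => g z, continuousOn_iff_continuous_domRestrict.1 hg⟩ : C(K, ℂ))
  have hGK : ∀ z ∈ K, G z = g z := fun z hz => by
    have := DFunLike.congr_fun hG ⟨z, hz⟩
    exact this
  let F1 : ℂ → ℂ := fun z => exp (G z) * ∏ j ∈ Finset.univ.erase i0, (z - p j) ^ (-k j)
  let F2 : ℂ → ℂ := fun z => (z - p i0) ^ k i0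
  let h : ℂ → ℂ := fun z => if z ∈ U then F1 z else F2 z
  have hF1c : ContinuousOn F1 (closure U) := by
    refine ContinuousOn.mul (by fun_prop) (continuousOn_finsetProd _ fun j hj => ?_)
    refine ContinuousOn.zpow₀ (by fun_prop) _ fun z hz => Or.inl ?_
    rw [sub_ne_zero]; rintro rfl
    exact hpj j (Finset.ne_of_mem_erase hj) hz
  have hi0U : p i0 ∈ U := mem_connectedComponentIn (hp i0)
  have hF2c : ContinuousOn F2 Uᶜ := by
    refine ContinuousOn.zpow₀ (by fun_prop) _ fun z hz => Or.inl ?_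
    rw [sub_ne_zero]; rintro rfl
    exact hz hi0U
  have h1 : ∀ z ∈ closure U, h z = F1 z := by
    intro z hz
    by_cases hzU : z ∈ U
    · simp [h, hzU]
    · have hzK := hUcl z hz hzU
      simp only [h, hzU, if_false, F1, F2]
      rw [hGK z hzK, hge z hzK, ← Finset.mul_prod_erase _ _ (Finset.mem_univ i0), mul_assoc,
        ← Finset.prod_mul_distrib, Finset.prod_eq_one, mul_one]
      intro j _
      rw [zpow_neg, mul_inv_cancel₀]
      refine zpow_ne_zero _ (sub_ne_zero.2 ?_)
      rintro rfl; exact hp j hzK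
  have h2 : ∀ z ∈ Uᶜ, h z = F2 z := by
    intro z hz
    simp only [h]; rw [if_neg hz]
  have hcont : Continuous h := by
    rw [← continuousOn_univ]
    have : (univ : Set ℂ) = closure U ∪ Uᶜ := by
      refine (eq_univ_of_forall fun z => ?_).symm
      by_cases hz : z ∈ U
      · exact Or.inl (subset_closure hz)
      · exact Or.inr hz
    rw [this]
    exact (hF1c.congr h1).union_of_isClosed (hF2c.congr h2) isClosed_closure hUo.isClosed_compl
  have hnz : ∀ z, h z ≠ 0 := by
    intro z
    by_cases hz : z ∈ U
    · rw [h1 z (subset_closure hz)]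
      refine mul_ne_zero (exp_ne_zero _) (Finset.prod_ne_zero_iff.2 fun j hj => ?_)
      refine zpow_ne_zero _ (sub_ne_zero.2 ?_)
      rintro rfl
      exact hpj j (Finset.ne_of_mem_erase hj) (subset_closure hz)
    · rw [h2 z hz]
      refine zpow_ne_zero _ (sub_ne_zero.2 ?_)
      rintro rfl; exact hz hi0U
  obtain ⟨l, hlc, hle⟩ := log_lift h hcont hnz
  obtain ⟨R, hR⟩ := (hb i0).subset_closedBall (p i0)
  have hR0 : 0 ≤ R := by
    have := hR hi0U
    simpa using this
  refine no_log_circle (p i0) (R + 1) (by linarith) (k i0) hk l hlc.continuousOn ?_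
  intro z hz
  rw [hle, h2 z]
  intro hzU
  have h3 := mem_closedBall.1 (hR hzU)
  rw [mem_sphere.1 hz] at h3
  linarith

lemma IsJ.degree {γ : Set ℂ} (hγ : IsJ γ) : ∃ d : ℂ → ℤ, ∀ (ι : Type) [Fintype ι] (p : ι → ℂ)
    (_ : ∀ i, p i ∉ γ) (k : ι → ℤ), ∑ i, k i * d (p i) = 0 →
    ∃ g : ℂ → ℂ, ContinuousOn g γ ∧ ∀ z ∈ γ, exp (g z) = ∏ i, (z - p i) ^ k i := by
  classical
  obtain ⟨e, hc, hi, rfl⟩ := hγ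
  have e1 : e 1 = e 0 := (hi _ _).2 ⟨1, by simp⟩
  have key : ∀ p : ℂ, ∃ (L : ℝ → ℂ) (d : ℤ), p ∉ range e →
      Continuous L ∧ (∀ t, exp (L t) = e t - p) ∧ L 1 = L 0 + d * (2 * Real.pi * I) := by
    intro p
    by_cases hp : p ∈ range e
    · exact ⟨0, 0, fun h => absurd hp h⟩
    · obtain ⟨L, hL, hLe⟩ := log_lift (fun t : ℝ => e t - p) (by fun_prop) (fun t h =>
        hp ⟨t, sub_eq_zero.1 h⟩)
      have : exp (L 1) = exp (L 0) := by rw [hLe, hLe, e1]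
      obtain ⟨n, hn⟩ := exp_eq_exp_iff_exists_int.1 this
      exact ⟨L, n, fun _ => ⟨hL, hLe, hn⟩⟩
  choose L d hLd using key
  refine ⟨d, fun ι _ p hp k hk => ?_⟩
  let G : ℝ → ℂ := fun t => ∑ i, k i * L (p i) t
  have hGc : Continuous G := continuous_finsetSum _ fun i _ =>
    continuous_const.mul (hLd (p i) (hp i)).1
  have hGe : ∀ t, exp (G t) = ∏ i, (e t - p i) ^ k i := by
    intro t
    simp only [G, exp_sum, exp_int_mul]
    exact Finset.prod_congr rfl fun i _ => by rw [(hLd (p i) (hp i)).2.1]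
  have hG1 : G 1 = G 0 := by
    have hk' : ∑ i, (k i : ℂ) * d (p i) = 0 := by exact_mod_cast hk
    calc G 1 = ∑ i, (k i * L (p i) 0 + (k i * d (p i)) * (2 * Real.pi * I)) :=
          Finset.sum_congr rfl fun i _ => by rw [(hLd (p i) (hp i)).2.2]; ring
      _ = G 0 := by rw [Finset.sum_add_distrib, ← Finset.sum_mul, hk']; simp [G]
  have hGeq : ∀ s ∈ Icc (0 : ℝ) 1, ∀ t ∈ Icc (0 : ℝ) 1, e s = e t → G s = G t := by
    intro s hs t ht hst
    obtain ⟨n, hn⟩ := (hi _ _).1 hst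
    have h1 : (-2 : ℝ) < n := by linarith [ht.1, ht.2, hs.1, hs.2]
    have h2 : (n : ℝ) < 2 := by linarith [ht.1, ht.2, hs.1, hs.2]
    have h1' : -2 < n := by exact_mod_cast h1
    have h2' : n < 2 := by exact_mod_cast h2
    have : n = 0 ∨ n = 1 ∨ n = -1 := by omega
    rcases this with rfl | rfl | rfl
    · have : s = t := by simp at hn; linarith
      rw [this]
    · have h3 : s = 1 := by push_cast at hn; linarith [ht.1, ht.2, hs.1, hs.2]
      have h4 : t = 0 := by push_cast at hn; linarith [ht.1, ht.2, hs.1, hs.2]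
      rw [h3, h4, hG1]
    · have h3 : s = 0 := by push_cast at hn; linarith [ht.1, ht.2, hs.1, hs.2]
      have h4 : t = 1 := by push_cast at hn; linarith [ht.1, ht.2, hs.1, hs.2]
      rw [h3, h4, hG1]
  have hsurj : ∀ z ∈ range e, ∃ t ∈ Icc (0 : ℝ) 1, e t = z := by
    intro z hz; rw [range_eq_Icc hi] at hz; exact hz
  let q : Icc (0 : ℝ) 1 → range e := fun t => ⟨e t, ⟨t, rfl⟩⟩
  have hqc : Continuous q := by fun_prop
  have hqs : Function.Surjective q := by
    rintro ⟨z, hz⟩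
    obtain ⟨t, ht, rfl⟩ := hsurj z hz
    exact ⟨⟨t, ht⟩, rfl⟩
  have hq : IsQuotientMap q := hqc.isClosedMap.isQuotientMap hqc hqs
  let g : ℂ → ℂ := fun z => if h : z ∈ range e then G (hsurj z h).choose else 0
  have hgG : ∀ t ∈ Icc (0 : ℝ) 1, g (e t) = G t := by
    intro t ht
    have hm : e t ∈ range e := ⟨t, rfl⟩
    have := (hsurj _ hm).choose_spec
    simp only [g, hm, dite_true]
    exact hGeq _ this.1 _ ht this.2
  refine ⟨g, ?_, ?_⟩
  · rw [continuousOn_iff_continuous_domRestrict, hq.continuous_iff]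
    have : (range e).domRestrict g ∘ q = fun t : Icc (0 : ℝ) 1 => G t := by
      funext t
      exact hgG t t.2
    rw [this]; fun_prop
  · intro z hz
    obtain ⟨t, ht, rfl⟩ := hsurj z hz
    rw [hgG t ht, hGe]

lemma glue_log {m : ℕ} (γ : Fin m → Set ℂ) (hcl : ∀ i, IsClosed (γ i))
    (hpair : ∀ i j, i ≠ j → γ i ∩ γ j = ∅ ∨ ∃ p, γ i ∩ γ j = {p})
    (hone : ∀ i j k l, i ≠ j → k ≠ l → (γ i ∩ γ j).Nonempty → (γ k ∩ γ l).Nonempty →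
        ({i, j} : Set (Fin m)) = {k, l}) (f : ℂ → ℂ)
    (hf : ∀ i, ∃ g : ℂ → ℂ, ContinuousOn g (γ i) ∧ ∀ z ∈ γ i, exp (g z) = f z) :
    ∃ g : ℂ → ℂ, ContinuousOn g (⋃ i, γ i) ∧ ∀ z ∈ ⋃ i, γ i, exp (g z) = f z := by
  classical
  have key : ∃ g : Fin m → ℂ → ℂ, (∀ i, ContinuousOn (g i) (γ i)) ∧
      (∀ i, ∀ z ∈ γ i, exp (g i z) = f z) ∧ ∀ i j z, z ∈ γ i → z ∈ γ j → g i z = g j z := by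
    choose g hg hge using hf
    by_cases hE : ∃ i j, i ≠ j ∧ (γ i ∩ γ j).Nonempty
    · obtain ⟨i, j, hij, hn⟩ := hE
      obtain ⟨p, hp⟩ : ∃ p, γ i ∩ γ j = {p} := by
        rcases hpair i j hij with h | h
        · rw [h] at hn; exact absurd hn (by simp)
        · exact h
      have hpm : p ∈ γ i ∩ γ j := by rw [hp]; rfl
      let c : Fin m → ℂ := fun l => if l = j then g i p - g j p else 0
      have hce : ∀ l, exp (c l) = 1 := by
        intro l
        by_cases hl : l = j
        · simp only [c, hl, if_true]
          rw [exp_sub, hge i p hpm.1, ← hge j p hpm.2, div_self (exp_ne_zero _)]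
        · simp [c, hl]
      refine ⟨fun l z => g l z + c l, fun l => (hg l).add continuousOn_const, fun l z hz => ?_, ?_⟩
      · simp only [exp_add, hce, mul_one, hge l z hz]
      · intro k l z hk hl
        by_cases hkl : k = l
        · rw [hkl]
        have hs := hone i j k l hij hkl hn ⟨z, hk, hl⟩
        have hk' : k ∈ ({i, j} : Set (Fin m)) := by rw [hs]; simp
        have hl' : l ∈ ({i, j} : Set (Fin m)) := by rw [hs]; simp
        have hfin : ∀ z ∈ γ i, z ∈ γ j → g i z + c i = g j z + c j := by
          intro z hi hj
          have : z ∈ γ i ∩ γ j := ⟨hi, hj⟩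
          rw [hp] at this
          obtain rfl : z = p := this
          simp [c, hij]
        rcases hk' with rfl | rfl <;> rcases hl' with rfl | rfl
        · exact absurd rfl hkl
        · exact hfin z hk hl
        · exact (hfin z hl hk).symm
        · exact absurd rfl hkl
    · push Not at hE
      refine ⟨g, hg, hge, fun i j z hi hj => ?_⟩
      by_cases hij : i = j
      · rw [hij]
      · have : z ∈ γ i ∩ γ j := ⟨hi, hj⟩
        rw [hE i j hij] at this
        exact absurd this (by simp)
  obtain ⟨g, hg, hge, hag⟩ := key
  let G : ℂ → ℂ := fun z => if h : ∃ i, z ∈ γ i then g h.choose z else 0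
  have hG : ∀ i, ∀ z ∈ γ i, G z = g i z := by
    intro i z hz
    have h : ∃ i, z ∈ γ i := ⟨i, hz⟩
    simp only [G, h, dite_true]
    exact hag _ _ _ h.choose_spec hz
  refine ⟨G, ?_, ?_⟩
  · exact (locallyFinite_of_finite γ).continuousOn_iUnion hcl (fun i => (hg i).congr (hG i))
  · intro z hz
    obtain ⟨i, hi⟩ := mem_iUnion.1 hz
    rw [hG i z hi, hge i z hi]

lemma main_complex (m : ℕ) (γ : Fin m → Set ℂ) (hJ : ∀ i, IsJ (γ i))
    (hpair : ∀ i j, i ≠ j → γ i ∩ γ j = ∅ ∨ ∃ p, γ i ∩ γ j = {p})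
    (hone : ∀ i j k l, i ≠ j → k ≠ l → (γ i ∩ γ j).Nonempty → (γ k ∩ γ l).Nonempty →
        ({i, j} : Set (Fin m)) = {k, l}) (Γ : Set ℂ) (hΓ : Γ = ⋃ i, γ i) :
    ∃ C : Fin (m + 1) → Set ℂ, Function.Injective C ∧
      {D | ∃ x ∈ Γᶜ, D = connectedComponentIn Γᶜ x} = range C ∧
      ∃ i₀ : Fin (m + 1), ¬ Bornology.IsBounded (C i₀) ∧
        ∀ i, i ≠ i₀ → Bornology.IsBounded (C i) := by
  classical
  have hcl : ∀ i, IsClosed (γ i) := fun i => (hJ i).isCompact.isClosed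
  have hK : IsCompact Γ := by rw [hΓ]; exact isCompact_iUnion fun i => (hJ i).isCompact
  have hsub : ∀ i, γ i ⊆ Γ := fun i => by rw [hΓ]; exact subset_iUnion γ i
  set 𝒞 : Set (Set ℂ) := {D | ∃ x ∈ Γᶜ, D = connectedComponentIn Γᶜ x} with h𝒞
  set ℬ : Set (Set ℂ) := {D | D ∈ 𝒞 ∧ Bornology.IsBounded D} with hℬ
  -- upper bound
  have hupper : ℬ.encard ≤ m := by
    by_contra hlt
    have hge : ((m + 1 : ℕ) : ℕ∞) ≤ ℬ.encard := by
      have := Order.add_one_le_of_lt (not_le.1 hlt)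
      exact_mod_cast this
    obtain ⟨t, htB, htc⟩ := exists_subset_encard_eq hge
    have htf : t.Finite := finite_of_encard_eq_coe htc
    have : Fintype t := htf.fintype
    have hcard : Fintype.card t = m + 1 := by
      have h1 : t.ncard = m + 1 := by rw [ncard, htc]; simp
      rw [← h1, ← Nat.card_coe_set_eq, Nat.card_eq_fintype_card]
    let q := (Fintype.equivFinOfCardEq hcard).symm
    have hx : ∀ i, ∃ x ∈ Γᶜ, (q i : Set ℂ) = connectedComponentIn Γᶜ x := fun i => (htB (q i).2).1
    choose p hp hpq using hx
    choose d hd using fun j => (hJ j).degree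
    let M : (Fin (m + 1) → ℤ) →ₗ[ℤ] (Fin m → ℤ) :=
      LinearMap.pi fun j => ∑ i, (d j (p i)) • LinearMap.proj i
    have hM : ∀ k j, M k j = ∑ i, k i * d j (p i) := by
      intro k j
      simp [M, mul_comm]
    have hker : ∀ k, M k = 0 → k = 0 := by
      intro k hk
      obtain ⟨g, hg, hge⟩ := glue_log γ hcl hpair hone (fun z => ∏ i, (z - p i) ^ k i)
        (fun j => hd j _ p (fun i h => hp i (hsub j h)) k (by rw [← hM, hk]; rfl))
      rw [← hΓ] at hg hge
      refine indep hK p hp (fun i j hij h => ?_) (fun i => ?_) k g hg hge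
      · rw [← hpq, ← hpq] at h
        exact hij (q.injective (Subtype.ext h))
      · rw [← hpq]; exact (htB (q i).2).2
    have := card_le_of_injective ℤ M ((injective_iff_map_eq_zero M).2 hker)
    simp at this
  -- the unbounded component
  obtain ⟨R, hR0, hR⟩ : ∃ R : ℝ, 0 < R ∧ Γ ⊆ closedBall 0 R := by
    obtain ⟨R, hR⟩ := hK.isBounded.subset_closedBall (0 : ℂ)
    exact ⟨max R 1, lt_max_of_lt_right one_pos, hR.trans (closedBall_subset_closedBall (le_max_left _ _))⟩
  let z0 : ℂ := ((R + 1 : ℝ) : ℂ)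
  have hz0B : z0 ∈ (closedBall (0 : ℂ) R)ᶜ := by
    simp only [mem_compl_iff, mem_closedBall, dist_zero_right, z0, norm_real, Real.norm_eq_abs, not_le]
    rw [abs_of_pos (by linarith)]; linarith
  have hBΓ : (closedBall (0 : ℂ) R)ᶜ ⊆ Γᶜ := compl_subset_compl.2 hR
  have hz0 : z0 ∈ Γᶜ := hBΓ hz0B
  set U0 := connectedComponentIn Γᶜ z0 with hU0
  have hBU : (closedBall (0 : ℂ) R)ᶜ ⊆ U0 :=
    (isPreconnected_compl_closedBall R hR0).subset_connectedComponentIn hz0B hBΓ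
  have hU0C : U0 ∈ 𝒞 := ⟨z0, hz0, rfl⟩
  have hU0u : ¬ Bornology.IsBounded U0 := by
    intro h
    have h1 : Bornology.IsBounded (closedBall (0 : ℂ) R ∪ U0) := isBounded_closedBall.union h
    have h2 : closedBall (0 : ℂ) R ∪ U0 = univ := by
      refine eq_univ_of_forall fun z => ?_
      by_cases hz : z ∈ closedBall (0 : ℂ) R
      · exact Or.inl hz
      · exact Or.inr (hBU hz)
    rw [h2] at h1
    exact NormedSpace.unbounded_univ ℂ ℂ h1
  have hunb : ∀ D ∈ 𝒞, D ≠ U0 → Bornology.IsBounded D := by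
    rintro D ⟨x, hx, rfl⟩ hne
    refine isBounded_closedBall.subset (t := closedBall (0 : ℂ) R) fun z hz => ?_
    by_contra hzB
    apply hne
    rw [connectedComponentIn_eq hz, hU0, connectedComponentIn_eq (hBU hzB)]
  have hCle : 𝒞.encard ≤ (m + 1 : ℕ) := by
    have h1 : 𝒞 ⊆ insert U0 ℬ := by
      intro D hD
      by_cases h : D = U0
      · exact Or.inl h
      · exact Or.inr ⟨hD, hunb D hD h⟩
    calc 𝒞.encard ≤ (insert U0 ℬ).encard := encard_le_encard h1
      _ ≤ ℬ.encard + 1 := encard_insert_le _ _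
      _ ≤ (m : ℕ∞) + 1 := by gcongr
      _ = _ := by push_cast; rfl
  have hCf : 𝒞.Finite := finite_of_encard_le_coe hCle
  have : Fintype 𝒞 := hCf.fintype
  have hcardC : Fintype.card 𝒞 = 𝒞.ncard := by
    rw [← Nat.card_coe_set_eq, Nat.card_eq_fintype_card]
  have hle : Fintype.card 𝒞 ≤ m + 1 := by
    rw [hcardC]
    have := hCf.cast_ncard_eq
    rw [← this] at hCle
    exact_mod_cast hCle
  -- lower bound
  have hge : m + 1 ≤ Fintype.card 𝒞 := by
    have ha : ∀ i, ∃ a ∈ γ i, ∀ j, j ≠ i → a ∉ γ j := by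
      intro i
      have hfin : (⋃ j ∈ {j | j ≠ i}, γ i ∩ γ j).Finite := by
        refine (toFinite _).biUnion fun j hj => ?_
        rcases hpair i j (Ne.symm hj) with h | ⟨p, h⟩
        · rw [h]; exact finite_empty
        · rw [h]; exact finite_singleton p
      obtain ⟨a, ha, ha2⟩ := ((hJ i).infinite.diff hfin).nonempty
      refine ⟨a, ha, fun j hj haj => ha2 ?_⟩
      exact mem_biUnion (x := j) hj ⟨ha, haj⟩
    choose a haγ han using ha
    choose w hw hwn using fun i => jordan_sep (hJ i) (haγ i)
    choose pt hpt hptD using fun D : 𝒞 => D.2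
    let M : (Option (Fin m) → ℂ) →ₗ[ℂ] (𝒞 → ℂ) :=
      LinearMap.pi fun D => LinearMap.proj none + ∑ i, (w i (pt D)) • LinearMap.proj (some i)
    have hM : ∀ c D, M c D = c none + ∑ i, c (some i) * w i (pt D) := by
      intro c D
      simp [M, mul_comm]
    have hker : ∀ c, M c = 0 → c = 0 := by
      intro c hc
      have hz : ∀ z ∈ Γᶜ, c none + ∑ i, c (some i) * w i z = 0 := by
        intro z hz
        let D : 𝒞 := ⟨connectedComponentIn Γᶜ z, z, hz, rfl⟩
        have h1 : M c D = 0 := by rw [hc]; rfl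
        rw [hM] at h1
        rw [← h1]
        congr 1
        refine Finset.sum_congr rfl fun i _ => ?_
        congr 1
        refine hw i (connectedComponentIn Γᶜ z) ?_ isPreconnected_connectedComponentIn z
          (mem_connectedComponentIn hz) _ ?_
        · exact (connectedComponentIn_subset _ _).trans (compl_subset_compl.2 (hsub i))
        · have h2 : pt D ∈ connectedComponentIn Γᶜ (pt D) := mem_connectedComponentIn (hpt D)
          rw [← hptD D] at h2
          exact h2
      have hsome : ∀ i, c (some i) = 0 := by
        intro i
        by_contra hci
        have hclo : IsClosed (⋃ j ∈ {j | j ≠ i}, γ j) :=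
          (toFinite _).isClosed_biUnion fun j _ => hcl j
        have hai : a i ∈ (⋃ j ∈ {j | j ≠ i}, γ j)ᶜ := by
          intro h
          obtain ⟨j, hj, h⟩ := mem_iUnion₂.1 h
          exact han i j hj h
        obtain ⟨r, hr, hrb⟩ := Metric.isOpen_iff.1 hclo.isOpen_compl _ hai
        have hball : ∀ j, j ≠ i → ball (a i) r ⊆ (γ j)ᶜ := by
          intro j hj z hz hzj
          exact hrb hz (mem_biUnion (x := j) hj hzj)
        refine hwn i r hr (-(c none + ∑ j ∈ Finset.univ.erase i, c (some j) * w j (a i)) / c (some i))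
          fun z hz' => ?_
        have hzΓ : z ∈ Γᶜ := by
          rw [hΓ]
          intro h
          obtain ⟨j, hj⟩ := mem_iUnion.1 h
          by_cases hji : j = i
          · subst hji; exact hz'.2 hj
          · exact hball j hji hz'.1 hj
        have h1 := hz z hzΓ
        rw [← Finset.add_sum_erase _ _ (Finset.mem_univ i)] at h1
        have h2 : ∑ j ∈ Finset.univ.erase i, c (some j) * w j z =
            ∑ j ∈ Finset.univ.erase i, c (some j) * w j (a i) := by
          refine Finset.sum_congr rfl fun j hj => ?_
          congr 1
          exact hw j _ (hball j (Finset.ne_of_mem_erase hj)) isPreconnected_ball z hz'.1 _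
            (mem_ball_self hr)
        rw [h2] at h1
        rw [eq_div_iff hci]
        linear_combination h1
      funext o
      cases o with
      | none =>
        have := hz z0 hz0
        simpa [hsome] using this
      | some i => exact hsome i
    have := card_le_of_injective ℂ M ((injective_iff_map_eq_zero M).2 hker)
    simpa using this
  have hcard : Fintype.card 𝒞 = m + 1 := le_antisymm hle hge
  let q := (Fintype.equivFinOfCardEq hcard).symm
  refine ⟨fun i => q i, Subtype.val_injective.comp q.injective, ?_, q.symm ⟨U0, hU0C⟩, ?_, ?_⟩
  · ext D
    constructor
    · intro hD
      exact ⟨q.symm ⟨D, hD⟩, by simp⟩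
    · rintro ⟨i, rfl⟩
      exact (q i).2
  · simpa using hU0u
  · intro i hi
    refine hunb _ (q i).2 fun h => hi ?_
    rw [Equiv.eq_symm_apply]
    exact Subtype.ext h

lemma isJ_of_sphere (T : EuclideanSpace ℝ (Fin 2) ≃ₗᵢ[ℝ] ℂ)
    (φ : (Metric.sphere (0 : EuclideanSpace ℝ (Fin 2)) 1 :
        Set (EuclideanSpace ℝ (Fin 2))) → EuclideanSpace ℝ (Fin 2))
    (hc : Continuous φ) (hi : Function.Injective φ) : IsJ (T '' range φ) := by
  have hn : ∀ t : ℝ, T.symm (exp (2 * Real.pi * t * I)) ∈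
      Metric.sphere (0 : EuclideanSpace ℝ (Fin 2)) 1 := by
    intro t
    rw [mem_sphere_zero_iff_norm, T.symm.norm_map]
    have := norm_exp_ofReal_mul_I (2 * Real.pi * t)
    push_cast at this
    exact this
  refine ⟨fun t => T (φ ⟨_, hn t⟩), ?_, ?_, ?_⟩
  · refine T.continuous.comp (hc.comp (Continuous.subtype_mk (T.symm.continuous.comp ?_) _))
    fun_prop
  · intro s t
    rw [T.injective.eq_iff, hi.eq_iff, Subtype.mk.injEq, T.symm.injective.eq_iff,
      exp_eq_exp_iff_exists_int]
    refine exists_congr fun n => ?_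
    constructor
    · intro h
      have h2 : ((2 * Real.pi * I : ℂ)) * s = (2 * Real.pi * I) * (t + n) := by
        linear_combination h
      have h3 := mul_left_cancel₀ two_pi_I_ne_zero h2
      have h4 : s = t + n := by exact_mod_cast h3
      linarith
    · intro h
      have h4 : s = t + n := by linarith
      rw [h4]; push_cast; ring
  · ext z
    constructor
    · rintro ⟨t, rfl⟩
      exact ⟨_, ⟨_, rfl⟩, rfl⟩
    · rintro ⟨_, ⟨x, rfl⟩, rfl⟩
      have hx : ‖T x‖ = 1 := by rw [T.norm_map]; simpa using x.2
      refine ⟨arg (T x) / (2 * Real.pi), ?_⟩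
      simp only
      congr 2
      apply Subtype.ext
      rw [LinearIsometryEquiv.symm_apply_eq]
      have h1 := norm_mul_exp_arg_mul_I (T x)
      rw [hx] at h1
      have hpi : (Real.pi : ℂ) ≠ 0 := by exact_mod_cast Real.pi_ne_zero
      calc _ = exp (arg (T x) * I) := by
            congr 1; push_cast; field_simp
        _ = _ := by simpa using h1

end JCF

/-- Given `m` distinct Jordan curves `γ 0, …, γ (m-1)` in `ℝ²` such that at most one
pair of them is semi-disjoint (intersecting in exactly one point) and all the other
pairs are disjoint, the complement of their union `Γ` has exactly `m + 1` connected
components, of which exactly one is unbounded and the remaining `m` are bounded. -/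
theorem complement_of_jordan_curve_family_components
    (m : ℕ)
    (γ : Fin m → Set (EuclideanSpace ℝ (Fin 2)))
    (hJordan : ∀ i, ∃ φ : (Metric.sphere (0 : EuclideanSpace ℝ (Fin 2)) 1 :
        Set (EuclideanSpace ℝ (Fin 2))) → EuclideanSpace ℝ (Fin 2),
        Continuous φ ∧ Function.Injective φ ∧ γ i = Set.range φ)
    (hdist : Function.Injective γ)
    (hpair : ∀ i j, i ≠ j → γ i ∩ γ j = ∅ ∨ ∃ p, γ i ∩ γ j = {p})
    (hone : ∀ i j k l, i ≠ j → k ≠ l → (γ i ∩ γ j).Nonempty → (γ k ∩ γ l).Nonempty →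
        ({i, j} : Set (Fin m)) = {k, l})
    (Γ : Set (EuclideanSpace ℝ (Fin 2))) (hΓ : Γ = ⋃ i, γ i) :
    ∃ C : Fin (m + 1) → Set (EuclideanSpace ℝ (Fin 2)),
      Function.Injective C ∧
      {D | ∃ x ∈ Γᶜ, D = connectedComponentIn Γᶜ x} = Set.range C ∧
      ∃ i₀ : Fin (m + 1), ¬ Bornology.IsBounded (C i₀) ∧
        ∀ i, i ≠ i₀ → Bornology.IsBounded (C i) := by
  classical
  let T : EuclideanSpace ℝ (Fin 2) ≃ₗᵢ[ℝ] ℂ := Complex.orthonormalBasisOneI.repr.symm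
  have hT := T.injective
  have hTinter : ∀ i j, T '' γ i ∩ T '' γ j = T '' (γ i ∩ γ j) := fun i j =>
    (Set.image_inter hT).symm
  obtain ⟨C, hCi, hCr, i₀, hi₀, hib⟩ := JCF.main_complex m (fun i => T '' γ i)
    (fun i => by
      obtain ⟨φ, hc, hi, h⟩ := hJordan i
      simp only [h]
      exact JCF.isJ_of_sphere T φ hc hi)
    (fun i j hij => by
      simp only [hTinter]
      rcases hpair i j hij with h | ⟨p, h⟩
      · left; rw [h]; simp
      · right; exact ⟨T p, by rw [h]; simp⟩)
    (fun i j k l hij hkl h1 h2 => by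
      simp only [hTinter, Set.image_nonempty] at h1 h2
      exact hone i j k l hij hkl h1 h2)
    (T '' Γ) (by rw [hΓ, Set.image_iUnion])
  have himg : ∀ x ∈ Γᶜ, T '' connectedComponentIn Γᶜ x = connectedComponentIn (T '' Γ)ᶜ (T x) := by
    intro x hx
    have := T.toHomeomorph.image_connectedComponentIn hx
    rw [← Set.image_compl_eq T.bijective]
    exact this
  have hpre : ∀ S : Set ℂ, T '' (T ⁻¹' S) = S := fun S => Set.image_preimage_eq S T.surjective
  have hbdd : ∀ S : Set ℂ, Bornology.IsBounded (T ⁻¹' S) ↔ Bornology.IsBounded S := by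
    intro S
    constructor
    · intro h
      rw [← hpre S]
      exact T.lipschitz.isBounded_image h
    · intro h
      exact T.antilipschitz.isBounded_preimage h
  refine ⟨fun i => T ⁻¹' C i, ?_, ?_, i₀, ?_, ?_⟩
  · intro i j hij
    apply hCi
    rw [← hpre (C i), ← hpre (C j)]
    exact congrArg _ hij
  · ext D
    constructor
    · rintro ⟨x, hx, rfl⟩
      have : T '' connectedComponentIn Γᶜ x ∈ Set.range C := by
        rw [← hCr]
        exact ⟨T x, fun h => hx (hT.mem_set_image.1 h), himg x hx⟩
      obtain ⟨i, hi⟩ := this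
      exact ⟨i, by simp only [hi]; exact Set.preimage_image_eq _ hT⟩
    · rintro ⟨i, rfl⟩
      have : C i ∈ Set.range C := ⟨i, rfl⟩
      rw [← hCr] at this
      obtain ⟨y, hy, hyC⟩ := this
      obtain ⟨x, rfl⟩ := T.surjective y
      have hx : x ∈ Γᶜ := fun h => hy (Set.mem_image_of_mem _ h)
      refine ⟨x, hx, ?_⟩
      simp only [hyC]
      rw [← himg x hx]
      exact Set.preimage_image_eq _ hT
  · simpa only [hbdd] using hi₀
  · intro i hi
    simpa only [hbdd] using hib i hi
end

section
/- Let S² be the unit sphere in EuclideanSpace ℝ (Fin 3) with its standard smooth manifold structure, let π : ℝ³ → ℝ be the projection onto the last coordinate, and let ι : S² → ℝ³ be a smooth embedding (ι is ContMDiff, injective, and its differential mfderiv at each point is injective). Set f = π ∘ ι. Suppose a ≤ b are real numbers such that f has no critical values in the interval [a, b], i.e. for every x ∈ S² with f(x) ∈ [a, b] the differential mfderiv of f at x is nonzero. Then there is a bijection between the set of connected components of the subspace π⁻¹({a}) ∖ ι(S²) and the set of connected components of the subspace π⁻¹({b}) ∖ ι(S²). -/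
open Metric Manifold

noncomputable section

instance : Fact (Module.finrank ℝ (EuclideanSpace ℝ (Fin 3)) = 2 + 1) :=
  ⟨finrank_euclideanSpace_fin⟩

open Set Filter Topology NNReal in
/-- Global integral curves of a bounded Lipschitz vector field. -/
theorem exists_global_curve {E : Type*} [NormedAddCommGroup E] [NormedSpace ℝ E] [CompleteSpace E]
    (V : E → E) (K B : ℝ≥0) (hK : LipschitzWith K V) (hB : ∀ x, ‖V x‖ ≤ B) (x : E) :
    ∃ γ : ℝ → E, γ 0 = x ∧ ∀ t, HasDerivAt γ (V (γ t)) t := by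
  have h1 : ∀ n : ℝ, ∃ γ : ℝ → E, γ 0 = x ∧ ∀ t ∈ Ioo (-n) n, HasDerivAt γ (V (γ t)) t := by
    intro n
    rcases le_or_gt n 0 with hn | hn
    · refine ⟨fun _ => x, rfl, fun t ht => ?_⟩
      have := ht.1; have := ht.2
      linarith
    have h0 : (0:ℝ) ∈ Icc (-n) n := ⟨by linarith, hn.le⟩
    have hp : IsPicardLindelof (fun _ ↦ V) (⟨0, h0⟩ : Icc (-n) n) x (B * n.toNNReal) 0 B K := by
      apply IsPicardLindelof.of_time_independent (fun x _ => hB x) hK.lipschitzOnWith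
      simp [hn.le]
    obtain ⟨α, h1, h2⟩ := hp.exists_eq_forall_mem_Icc_hasDerivWithinAt₀
    refine ⟨α, h1, fun t ht => ?_⟩
    exact (h2 t (Ioo_subset_Icc_self ht)).hasDerivAt (Icc_mem_nhds ht.1 ht.2)
  choose γ h0 hγ using h1
  have heq : ∀ m n, 0 < m → m ≤ n → EqOn (γ m) (γ n) (Ioo (-m) m) := by
    intro m n hm hmn
    refine ODE_solution_unique_of_mem_Ioo (v := fun _ => V) (s := fun _ => univ) (t₀ := 0)
      (fun _ _ => hK.lipschitzOnWith) ⟨by linarith, hm⟩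
      (fun t ht => ⟨hγ m t ht, trivial⟩)
      (fun t ht => ⟨hγ n t ⟨by linarith [ht.1], by linarith [ht.2]⟩, trivial⟩) (by rw [h0, h0])
  refine ⟨fun t => γ (|t| + 1) t, h0 _, fun t => ?_⟩
  have ht : t ∈ Ioo (-(|t|+1)) (|t|+1) := ⟨by linarith [neg_abs_le t], by linarith [le_abs_self t]⟩
  refine (hγ (|t|+1) t ht).congr_of_eventuallyEq ?_
  filter_upwards [Ioo_mem_nhds ht.1 ht.2] with s hs
  have hs' : s ∈ Ioo (-(|s|+1)) (|s|+1) := ⟨by linarith [neg_abs_le s], by linarith [le_abs_self s]⟩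
  rcases le_total (|s|+1) (|t|+1) with h | h
  · exact heq _ _ (by positivity) h hs'
  · exact (heq _ _ (by positivity) h hs).symm

open Set Filter Topology NNReal in
/-- Global flow of a bounded Lipschitz vector field. -/
theorem exists_global_flow {E : Type*} [NormedAddCommGroup E] [NormedSpace ℝ E] [CompleteSpace E]
    (V : E → E) (K B : ℝ≥0) (hK : LipschitzWith K V) (hB : ∀ x, ‖V x‖ ≤ B) :
    ∃ Φ : ℝ → E → E, (∀ x, Φ 0 x = x) ∧ (∀ x t, HasDerivAt (fun s => Φ s x) (V (Φ t x)) t) ∧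
      (∀ s t x, Φ s (Φ t x) = Φ (s + t) x) ∧ (∀ t, Continuous (Φ t)) := by
  choose γ h0 hγ using exists_global_curve V K B hK hB
  have hcont : ∀ x, Continuous (γ x) := fun x =>
    continuous_iff_continuousAt.2 fun t => (hγ x t).continuousAt
  refine ⟨fun t x => γ x t, h0, hγ, ?_, ?_⟩
  · intro s t x
    have : γ (γ x t) = fun s => γ x (s + t) := by
      refine ODE_solution_unique_univ (v := fun _ => V) (s := fun _ => univ) (t₀ := 0)
        (fun _ => hK.lipschitzOnWith) (fun s => ⟨hγ _ s, trivial⟩)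
        (fun s => ⟨?_, trivial⟩) (by simp [h0])
      exact (hγ x (s + t)).comp_add_const s t
    exact congrFun this s
  · intro t
    rcases le_total 0 t with ht | ht
    · refine (LipschitzWith.of_dist_le_mul (K := (Real.exp (K * t)).toNNReal) fun x y => ?_).continuous
      rw [Real.coe_toNNReal _ (Real.exp_pos _).le, mul_comm]
      have := dist_le_of_trajectories_ODE (v := fun _ => V) (a := 0) (b := t) (fun _ => hK)
        (hcont x).continuousOn (fun s _ => (hγ x s).hasDerivWithinAt)
        (hcont y).continuousOn (fun s _ => (hγ y s).hasDerivWithinAt)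
        (δ := dist x y) (by rw [h0, h0]) t ⟨ht, le_rfl⟩
      simpa using this
    · refine (LipschitzWith.of_dist_le_mul (K := (Real.exp (K * (-t))).toNNReal) fun x y => ?_).continuous
      rw [Real.coe_toNNReal _ (Real.exp_pos _).le, mul_comm]
      have hd : ∀ x s, HasDerivAt (fun s => γ x (-s)) (-(V (γ x (-s)))) s := by
        intro x s
        have := (hγ x (-s)).scomp s (hasDerivAt_neg s)
        simpa [Function.comp_def] using this
      have := dist_le_of_trajectories_ODE (v := fun _ => fun z => -(V z)) (a := 0) (b := -t)
        (fun _ => hK.neg)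
        (f := fun s => γ x (-s)) (g := fun s => γ y (-s))
        ((hcont x).comp continuous_neg).continuousOn (fun s _ => (hd x s).hasDerivWithinAt)
        ((hcont y).comp continuous_neg).continuousOn (fun s _ => (hd y s).hasDerivWithinAt)
        (δ := dist x y) (by simp [h0]) (-t) ⟨by linarith, le_rfl⟩
      simpa using this

/-- `p` has a neighbourhood in which `M` is parametrised by a `C^2` immersion `j` with a `C^2`
left inverse `r`, with tangent spaces given by `T`. -/
def LocParam {E : Type*} [NormedAddCommGroup E] [NormedSpace ℝ E]
    (F : Type*) [NormedAddCommGroup F] [NormedSpace ℝ F]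
    (M : Set E) (T : E → Set E) (p : E) : Prop :=
  ∃ (U : Set E) (Ω : Set F) (r : E → F) (j : F → E), IsOpen U ∧ p ∈ U ∧ IsOpen Ω ∧
    ContDiffOn ℝ 2 r U ∧ ContDiffOn ℝ 2 j Ω ∧ Set.MapsTo r U Ω ∧ Set.MapsTo j Ω (M ∩ U) ∧
    (∀ y ∈ Ω, r (j y) = y) ∧ (∀ q ∈ M ∩ U, j (r q) = q) ∧
    ∀ y ∈ Ω, T (j y) = Set.range (fderiv ℝ j y)

open Set Filter Topology NNReal in
theorem curve_stays {E : Type*} [NormedAddCommGroup E] [NormedSpace ℝ E] [CompleteSpace E]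
    {F : Type*} [NormedAddCommGroup F] [NormedSpace ℝ F] [CompleteSpace F]
    {M : Set E} {T : E → Set E} (hM : IsClosed M) (hloc : ∀ p ∈ M, LocParam F M T p)
    {V : E → E} {K : ℝ≥0} (hK : LipschitzWith K V) (hV : ContDiff ℝ 1 V)
    {O : Set E} (hO : IsOpen O) (hT : ∀ q ∈ M, q ∈ O → V q ∈ T q)
    {γ : ℝ → E} (hγ : ∀ t, HasDerivAt γ (V (γ t)) t)
    {I : Set ℝ} (hI : IsOpen I) (hIc : IsPreconnected I) (hIsub : ∀ t ∈ I, γ t ∈ O)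
    {t₀ : ℝ} (ht₀ : t₀ ∈ I) (h0 : γ t₀ ∈ M) : ∀ t ∈ I, γ t ∈ M := by
  have hcont : Continuous γ := continuous_iff_continuousAt.2 fun t => (hγ t).continuousAt
  suffices h : I ⊆ {t | t ∈ I ∧ γ t ∈ M} from fun t ht => (h ht).2
  refine hIc.subset_of_closure_inter_subset ?_ ⟨t₀, ht₀, ht₀, h0⟩ ?_
  · rw [isOpen_iff_mem_nhds]
    rintro t ⟨htI, htM⟩
    obtain ⟨U, Ω, r, j, hU, hpU, hΩ, hr, hj, hrU, hjΩ, hrj, hjr, hTj⟩ := hloc _ htM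
    have hy0 : r (γ t) ∈ Ω := hrU hpU
    have hjy0 : j (r (γ t)) = γ t := hjr _ ⟨htM, hpU⟩
    have hY : ContDiffAt ℝ 1 (fun y => fderiv ℝ r (j y) (V (j y))) (r (γ t)) := by
      have hj1 : ContDiffAt ℝ 1 j (r (γ t)) :=
        ((hj.contDiffAt (hΩ.mem_nhds hy0))).of_le (by norm_num)
      have hdr : ContDiffAt ℝ 1 (fderiv ℝ r) (j (r (γ t))) := by
        rw [hjy0]
        exact (hr.contDiffAt (hU.mem_nhds hpU)).fderiv_right (by norm_num)
      exact (ContDiffAt.comp (r (γ t)) hdr hj1).clm_apply (hV.contDiffAt.comp _ hj1)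
    obtain ⟨α, hα0, ε, hε, hα⟩ :=
      hY.exists_forall_mem_closedBall_exists_eq_forall_mem_Ioo_hasDerivAt₀ t
    have hev : ∀ᶠ s in 𝓝 t, HasDerivAt α (fderiv ℝ r (j (α s)) (V (j (α s)))) s := by
      filter_upwards [Ioo_mem_nhds (by linarith : t - ε < t) (by linarith : t < t + ε)] with s hs
      exact hα s hs
    have hαc : ContinuousAt α t := (hev.self_of_nhds).continuousAt
    have hαΩ : ∀ᶠ s in 𝓝 t, α s ∈ Ω := hαc (hΩ.mem_nhds (by rw [hα0]; exact hy0))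
    have hjαO : ∀ᶠ s in 𝓝 t, j (α s) ∈ O := by
      have h1 : ContinuousAt j (α t) := by
        rw [hα0]; exact (hj.contDiffAt (hΩ.mem_nhds hy0)).continuousAt
      have h2 : ContinuousAt (fun s => j (α s)) t := ContinuousAt.comp h1 hαc
      refine h2 (hO.mem_nhds ?_)
      change j (α t) ∈ O
      rw [hα0, hjy0]; exact hIsub t htI
    have hev2 : ∀ᶠ s in 𝓝 t, HasDerivAt (fun s => j (α s)) (V (j (α s))) s := by
      filter_upwards [hev, hαΩ, hjαO] with s h1 h2 h3
      have hjd : HasFDerivAt j (fderiv ℝ j (α s)) (α s) :=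
        ((hj.contDiffAt (hΩ.mem_nhds h2)).differentiableAt (by norm_num)).hasFDerivAt
      have hrd : HasFDerivAt r (fderiv ℝ r (j (α s))) (j (α s)) :=
        ((hr.contDiffAt (hU.mem_nhds (hjΩ h2).2)).differentiableAt (by norm_num)).hasFDerivAt
      have hid : (fderiv ℝ r (j (α s))).comp (fderiv ℝ j (α s)) = ContinuousLinearMap.id ℝ F := by
        refine (hrd.comp (α s) hjd).unique ?_
        refine (hasFDerivAt_id (α s)).congr_of_eventuallyEq ?_
        filter_upwards [hΩ.mem_nhds h2] with y hy
        exact hrj y hy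
      have hv := hT _ (hjΩ h2).1 h3
      rw [hTj _ h2] at hv
      obtain ⟨w, hw⟩ := hv
      have h4 := hjd.comp_hasDerivAt s h1
      have h5 : fderiv ℝ j (α s) (fderiv ℝ r (j (α s)) (V (j (α s)))) = V (j (α s)) := by
        rw [← hw]
        have := congrArg (fun A : F →L[ℝ] F => A w) hid
        simp only [ContinuousLinearMap.comp_apply, ContinuousLinearMap.id_apply] at this
        rw [this]
      rw [h5] at h4
      exact h4
    have huniq : γ =ᶠ[𝓝 t] fun s => j (α s) := by
      refine ODE_solution_unique_of_eventually (v := fun _ => V) (s := fun _ => univ) (K := K)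
        (Eventually.of_forall fun _ => hK.lipschitzOnWith)
        (Eventually.of_forall fun s => ⟨hγ s, trivial⟩)
        (hev2.mono fun s hs => ⟨hs, trivial⟩) ?_
      rw [hα0, hjy0]
    filter_upwards [huniq, hαΩ, hI.mem_nhds htI] with s h1 h2 h3
    exact ⟨h3, by rw [h1]; exact (hjΩ h2).1⟩
  · rintro t ⟨htc, htI⟩
    refine ⟨htI, ?_⟩
    have : closure {t | t ∈ I ∧ γ t ∈ M} ⊆ γ ⁻¹' M :=
      closure_minimal (fun s hs => hs.2) (hM.preimage hcont)
    exact this htc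

open Set Filter Topology NNReal in
theorem isClosed_crit {E : Type*} [NormedAddCommGroup E] [NormedSpace ℝ E]
    {F : Type*} [NormedAddCommGroup F] [NormedSpace ℝ F]
    {M : Set E} {T : E → Set E} (hM : IsClosed M) (hloc : ∀ p ∈ M, LocParam F M T p)
    (π : E →L[ℝ] ℝ) : IsClosed {p | p ∈ M ∧ ∀ v ∈ T p, π v = 0} := by
  rw [← isOpen_compl_iff, isOpen_iff_mem_nhds]
  intro p hp
  by_cases hpM : p ∈ M
  · have : ∃ v ∈ T p, π v ≠ 0 := by
      by_contra! h
      exact hp ⟨hpM, h⟩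
    obtain ⟨v, hv, hv0⟩ := this
    obtain ⟨U, Ω, r, j, hU, hpU, hΩ, hr, hj, hrU, hjΩ, hrj, hjr, hTj⟩ := hloc _ hpM
    have h1 : T p = range (fderiv ℝ j (r p)) := by
      rw [← hTj _ (hrU hpU), hjr _ ⟨hpM, hpU⟩]
    rw [h1] at hv
    obtain ⟨w, rfl⟩ := hv
    have hc : ContinuousAt (fun q => π (fderiv ℝ j (r q) w)) p := by
      have hrc : ContinuousAt r p := (hr.contDiffAt (hU.mem_nhds hpU)).continuousAt
      have hjc : ContinuousAt (fderiv ℝ j) (r p) :=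
        ((hj.contDiffAt (hΩ.mem_nhds (hrU hpU))).fderiv_right (m := 1) (by norm_num)).continuousAt
      have : ContinuousAt (fun q => fderiv ℝ j (r q)) p := ContinuousAt.comp hjc hrc
      exact π.continuous.continuousAt.comp (this.clm_apply continuousAt_const)
    filter_upwards [hc.eventually_ne hv0, hU.mem_nhds hpU] with q h2 h3 h4
    refine h2 (h4.2 _ ?_)
    have h5 := hTj _ (hrU h3)
    rw [hjr _ ⟨h4.1, h3⟩] at h5
    rw [h5]
    exact ⟨w, rfl⟩
  · filter_upwards [hM.isOpen_compl.mem_nhds hpM] with q hq h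
    exact hq h.1

open Set Filter Topology NNReal in
theorem exists_eps {E : Type*} [NormedAddCommGroup E] [NormedSpace ℝ E]
    {F : Type*} [NormedAddCommGroup F] [NormedSpace ℝ F]
    {M : Set E} {T : E → Set E} (hM : IsCompact M) (hloc : ∀ p ∈ M, LocParam F M T p)
    (π : E →L[ℝ] ℝ) {a b : ℝ} (hab : a ≤ b)
    (hreg : ∀ p ∈ M, π p ∈ Icc a b → ∃ v ∈ T p, π v ≠ 0) :
    ∃ ε > 0, ∀ p ∈ M, π p ∈ Icc (a - ε) (b + ε) → ∃ v ∈ T p, π v ≠ 0 := by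
  set C := {p | p ∈ M ∧ ∀ v ∈ T p, π v = 0} with hC
  have hCc : IsCompact C := hM.of_isClosed_subset (isClosed_crit hM.isClosed hloc π) fun p hp => hp.1
  have hCi : IsClosed (π '' C) := (hCc.image π.continuous).isClosed
  have hsub : Icc a b ⊆ (π '' C)ᶜ := by
    rintro t ht ⟨p, hp, rfl⟩
    obtain ⟨v, hv, hv0⟩ := hreg p hp.1 ht
    exact hv0 (hp.2 v hv)
  obtain ⟨δ, hδ, h⟩ := isCompact_Icc.exists_cthickening_subset_open hCi.isOpen_compl hsub
  refine ⟨δ, hδ, fun p hp hpi => ?_⟩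
  by_contra! hcon
  have : π p ∈ Metric.cthickening δ (Icc a b) := by
    refine Metric.mem_cthickening_of_dist_le (π p) (max a (min b (π p))) δ _
      ⟨le_max_left _ _, max_le hab (min_le_left _ _)⟩ ?_
    rw [Real.dist_eq, abs_le]
    have h1 := hpi.1
    have h2 := hpi.2
    rcases max_cases a (min b (π p)) with ⟨h3, h4⟩ | ⟨h3, h4⟩ <;>
    rcases min_cases b (π p) with ⟨h5, h6⟩ | ⟨h5, h6⟩ <;> constructor <;> linarith
  exact h this ⟨p, ⟨hp, hcon⟩, rfl⟩

open Set Filter Topology NNReal in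
theorem exists_field {E : Type*} [NormedAddCommGroup E] [NormedSpace ℝ E] [FiniteDimensional ℝ E]
    {F : Type*} [NormedAddCommGroup F] [NormedSpace ℝ F]
    {M : Set E} {T : E → Set E} (hM : IsCompact M) (hloc : ∀ p ∈ M, LocParam F M T p)
    (hT : ∀ p, Convex ℝ (T p))
    (π : E →L[ℝ] ℝ) (e : E) (he : π e = 1) {a b : ℝ}
    (hreg : ∀ p ∈ M, π p ∈ Icc a b → ∃ v ∈ T p, π v ≠ 0) :
    ∃ (V : E → E) (K B : ℝ≥0), ContDiff ℝ 1 V ∧ LipschitzWith K V ∧ (∀ x, ‖V x‖ ≤ B) ∧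
      (∀ x, π (V x) = 1) ∧ ∀ p ∈ M, π p ∈ Icc a b → V p ∈ T p := by
  obtain ⟨R, hR⟩ := hM.isBounded.subset_ball (0 : E)
  set N := M ∩ π ⁻¹' Icc a b with hN
  have hNc : IsClosed N := hM.isClosed.inter (isClosed_Icc.preimage π.continuous)
  let t : E → Set E := fun q => {v | π v = 1 ∧ (q ∈ N → v ∈ T q) ∧ (q ∉ Metric.ball (0:E) R → v = e)}
  have ht : ∀ q, Convex ℝ (t q) := by
    intro q v hv w hw s u hs hu hsu
    refine ⟨by simp [hv.1, hw.1, hsu], fun h => hT q (hv.2.1 h) (hw.2.1 h) hs hu hsu, fun h => ?_⟩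
    rw [hv.2.2 h, hw.2.2 h, ← add_smul, hsu, one_smul]
  have hl : ∀ q : E, ∃ U ∈ 𝓝 q, ∃ g : E → E, ContMDiffOn 𝓘(ℝ, E) 𝓘(ℝ, E) ((1 : ℕ∞) : WithTop ℕ∞) g U ∧
      ∀ y ∈ U, g y ∈ t y := by
    intro p
    by_cases hp : p ∈ N
    · obtain ⟨v, hv, hv0⟩ := hreg p hp.1 hp.2
      obtain ⟨U, Ω, r, j, hU, hpU, hΩ, hr, hj, hrU, hjΩ, hrj, hjr, hTj⟩ := hloc _ hp.1
      have hTq : ∀ q ∈ M ∩ U, T q = range (fderiv ℝ j (r q)) := fun q hq => by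
        rw [← hTj _ (hrU hq.2), hjr _ hq]
      rw [hTq p ⟨hp.1, hpU⟩] at hv
      obtain ⟨w, rfl⟩ := hv
      have hX : ContDiffOn ℝ 1 (fun q => fderiv ℝ j (r q) w) U := by
        intro q hq
        have hrc : ContDiffAt ℝ 1 r q := (hr.contDiffAt (hU.mem_nhds hq)).of_le (by norm_num)
        have hjc : ContDiffAt ℝ 1 (fderiv ℝ j) (r q) :=
          (hj.contDiffAt (hΩ.mem_nhds (hrU hq))).fderiv_right (m := 1) (by norm_num)
        have : ContDiffAt ℝ 1 (fun q => fderiv ℝ j (r q)) q := ContDiffAt.comp q hjc hrc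
        exact (this.clm_apply contDiffAt_const).contDiffWithinAt
      have hπX : ContDiffOn ℝ 1 (fun q => π (fderiv ℝ j (r q) w)) U :=
        π.contDiff.comp_contDiffOn hX
      refine ⟨U ∩ Metric.ball 0 R ∩ {q | π (fderiv ℝ j (r q) w) ≠ 0}, ?_,
        fun q => (π (fderiv ℝ j (r q) w))⁻¹ • fderiv ℝ j (r q) w, ?_, ?_⟩
      · refine inter_mem (inter_mem (hU.mem_nhds hpU) (Metric.isOpen_ball.mem_nhds (hR hp.1))) ?_
        exact (hπX.continuousOn.continuousAt (hU.mem_nhds hpU)).eventually_ne hv0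
      · rw [contMDiffOn_iff_contDiffOn]
        exact ((hπX.mono fun q hq => hq.1.1).inv fun q hq => hq.2).smul (hX.mono fun q hq => hq.1.1)
      · rintro q ⟨⟨hqU, hqB⟩, hq0⟩
        refine ⟨?_, fun hqN => ?_, fun h => absurd hqB h⟩
        · simp only [map_smul, smul_eq_mul]
          exact inv_mul_cancel₀ hq0
        · rw [hTq q ⟨hqN.1, hqU⟩]
          exact ⟨(π (fderiv ℝ j (r q) w))⁻¹ • w, by simp⟩
    · exact ⟨Nᶜ, hNc.isOpen_compl.mem_nhds hp, fun _ => e, contMDiffOn_const,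
        fun q hq => ⟨he, fun h => absurd h hq, fun _ => rfl⟩⟩
  obtain ⟨g, hg⟩ := exists_contMDiffMap_forall_mem_convex_of_local 𝓘(ℝ, E) ht hl
  have hgc : ContDiff ℝ 1 g := contMDiff_iff_contDiff.1 g.contMDiff
  have hgs : ContDiff ℝ 1 (fun x => g x - e) := hgc.sub contDiff_const
  have hcs : HasCompactSupport (fun x => g x - e) := by
    refine HasCompactSupport.intro (isCompact_closedBall (0:E) R) fun x hx => ?_
    rw [(hg x).2.2 fun h => hx (Metric.ball_subset_closedBall h), sub_self]
  obtain ⟨K, hK⟩ := hgs.lipschitzWith_of_hasCompactSupport hcs (by norm_num)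
  obtain ⟨B, hB⟩ := hcs.exists_bound_of_continuous hgs.continuous
  refine ⟨g, K, (B + ‖e‖).toNNReal, hgc, ?_, fun x => ?_, fun x => (hg x).1,
    fun p hp hpi => (hg p).2.1 ⟨hp, hpi⟩⟩
  · refine LipschitzWith.of_dist_le_mul fun x y => ?_
    have := hK.dist_le_mul x y
    rwa [dist_sub_right] at this
  · refine le_trans ?_ (Real.le_coe_toNNReal _)
    calc ‖g x‖ = ‖(g x - e) + e‖ := by simp
      _ ≤ _ := (norm_add_le _ _).trans (by gcongr; exact hB x)

open Set Filter Topology NNReal in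
theorem slices_homeo {E : Type*} [NormedAddCommGroup E] [NormedSpace ℝ E] [FiniteDimensional ℝ E]
    {F : Type*} [NormedAddCommGroup F] [NormedSpace ℝ F] [CompleteSpace F]
    {M : Set E} {T : E → Set E} (hM : IsCompact M) (hloc : ∀ p ∈ M, LocParam F M T p)
    (hT : ∀ p, Convex ℝ (T p))
    (π : E →L[ℝ] ℝ) (e : E) (he : π e = 1) {a b : ℝ} (hab : a ≤ b)
    (hreg : ∀ p ∈ M, π p ∈ Icc a b → ∃ v ∈ T p, π v ≠ 0) :
    Nonempty ((π ⁻¹' {a} \ M : Set E) ≃ₜ (π ⁻¹' {b} \ M : Set E)) := by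
  have : CompleteSpace E := FiniteDimensional.complete ℝ E
  obtain ⟨ε, hε, hreg'⟩ := exists_eps hM hloc π hab hreg
  obtain ⟨V, K, B, hV, hK, hB, hV1, hVT⟩ := exists_field hM hloc hT π e he hreg'
  obtain ⟨Φ, h0, hd, hadd, hcont⟩ := exists_global_flow V K B hK hB
  have hπΦ : ∀ t x, π (Φ t x) = π x + t := by
    intro t x
    have h1 : ∀ s, HasDerivAt (fun s => π (Φ s x) - s) 0 s := by
      intro s
      have h3 := π.hasFDerivAt.comp_hasDerivAt s (hd x s)
      rw [hV1] at h3
      have h4 := HasDerivAt.fun_sub h3 (hasDerivAt_id' s)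
      rw [sub_self] at h4
      exact h4
    have h2 := is_const_of_deriv_eq_zero (fun s => (h1 s).differentiableAt)
      (fun s => (h1 s).deriv) t 0
    simp only [h0, sub_zero] at h2
    linarith
  have hinv : ∀ x ∈ M, ∀ t, π x ∈ Icc a b → π x + t ∈ Icc a b → Φ t x ∈ M := by
    intro x hx t h1 h2
    refine curve_stays hM.isClosed hloc hK hV (O := π ⁻¹' Ioo (a - ε) (b + ε))
      (isOpen_Ioo.preimage π.continuous) (fun q hq hqO => hVT q hq (Ioo_subset_Icc_self hqO))
      (γ := fun s => Φ s x) (hd x) (I := Ioo (a - ε - π x) (b + ε - π x)) isOpen_Ioo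
      isPreconnected_Ioo ?_ (t₀ := 0) ?_ ?_ t ?_
    · intro s hs
      simp only [mem_preimage, hπΦ, mem_Ioo]
      exact ⟨by linarith [hs.1], by linarith [hs.2]⟩
    · exact ⟨by linarith [h1.1], by linarith [h1.2]⟩
    · simpa only [h0] using hx
    · exact ⟨by linarith [h2.1], by linarith [h2.2]⟩
  have hmap : ∀ c d, c ∈ Icc a b → d ∈ Icc a b → ∀ x ∈ π ⁻¹' {c} \ M,
      Φ (d - c) x ∈ π ⁻¹' {d} \ M := by
    rintro c d hc hd' x ⟨hx, hxM⟩
    have hx : π x = c := hx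
    refine ⟨?_, fun h => hxM ?_⟩
    · simp [hπΦ, hx]
    · have := hinv _ h (c - d) (by rw [hπΦ, hx]; simpa using hd') (by rw [hπΦ, hx]; simpa using hc)
      rw [hadd] at this
      simpa [h0] using this
  have ha : a ∈ Icc a b := ⟨le_rfl, hab⟩
  have hb : b ∈ Icc a b := ⟨hab, le_rfl⟩
  exact ⟨{
    toFun := fun x => ⟨Φ (b - a) x, hmap a b ha hb x x.2⟩
    invFun := fun x => ⟨Φ (a - b) x, hmap b a hb ha x x.2⟩
    left_inv := fun x => Subtype.ext (by simp [hadd, h0])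
    right_inv := fun x => Subtype.ext (by simp [hadd, h0])
    continuous_toFun := ((hcont _).comp continuous_subtype_val).subtype_mk _
    continuous_invFun := ((hcont _).comp continuous_subtype_val).subtype_mk _ }⟩

theorem components_equiv_of_homeo {X Y : Type*} [TopologicalSpace X] [TopologicalSpace Y]
    (h : X ≃ₜ Y) : Nonempty (ConnectedComponents X ≃ ConnectedComponents Y) := by
  refine ⟨(Topology.IsCoinducing.connectedComponentsHomeomorph (f := h)
    h.isQuotientMap.isCoinducing fun y => ?_).toEquiv⟩
  have : h ⁻¹' {y} = {h.symm y} := by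
    ext x
    simp [Homeomorph.eq_symm_apply]
  rw [this]
  exact isConnected_singleton

abbrev E3 := EuclideanSpace ℝ (Fin 3)
abbrev F2 := EuclideanSpace ℝ (Fin 2)
abbrev S2 := (sphere (0 : EuclideanSpace ℝ (Fin 3)) 1 : Set (EuclideanSpace ℝ (Fin 3)))

/-- The tangent space of the image of `ι` at `q`. -/
def tanSet (ι : S2 → E3) (q : E3) : Set E3 :=
  {v | ∃ x, ι x = q ∧ ∃ w : F2, (mfderiv (𝓡 2) 𝓘(ℝ, E3) ι x : F2 → E3) w = v}

theorem tanSet_apply {ι : S2 → E3} (hinj : Function.Injective ι) (x : S2) :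
    tanSet ι (ι x) = Set.range (mfderiv (𝓡 2) 𝓘(ℝ, E3) ι x : F2 → E3) := by
  ext v
  constructor
  · rintro ⟨y, hy, w, hw⟩
    obtain rfl := hinj hy
    exact ⟨w, hw⟩
  · rintro ⟨w, hw⟩
    exact ⟨x, rfl, w, hw⟩

theorem convex_tanSet {ι : S2 → E3} (hinj : Function.Injective ι) (q : E3) :
    Convex ℝ (tanSet ι q) := by
  by_cases h : ∃ x, ι x = q
  · obtain ⟨x, rfl⟩ := h
    rw [tanSet_apply hinj]
    have h2 : ∀ A : F2 →L[ℝ] E3, Convex ℝ (Set.range A) := fun A =>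
      Submodule.convex (LinearMap.range (A : F2 →ₗ[ℝ] E3))
    exact h2 (mfderiv (𝓡 2) 𝓘(ℝ, E3) ι x)
  · have : tanSet ι q = ∅ := by
      ext v
      simp only [Set.mem_empty_iff_false, iff_false]
      rintro ⟨x, hx, _⟩
      exact h ⟨x, hx⟩
    rw [this]
    exact convex_empty

theorem contDiffOn_param {ι : S2 → E3}
    (hι : ContMDiff (𝓡 2) 𝓘(ℝ, E3) (⊤ : ℕ∞) ι) (x₀ : S2) :
    ContDiffOn ℝ 2 (ι ∘ (extChartAt (𝓡 2) x₀).symm) (extChartAt (𝓡 2) x₀).target := by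
  rw [← contMDiffOn_iff_contDiffOn]
  refine ContMDiff.comp_contMDiffOn (hι.of_le ?_) (contMDiffOn_extChartAt_symm x₀)
  exact WithTop.coe_le_coe.2 (le_top : (2 : ℕ∞) ≤ ⊤)

theorem range_fderiv_param {ι : S2 → E3}
    (hι : ContMDiff (𝓡 2) 𝓘(ℝ, E3) (⊤ : ℕ∞) ι) (x₀ : S2) (y : F2)
    (hy : y ∈ (extChartAt (𝓡 2) x₀).target) :
    Set.range (fderiv ℝ (ι ∘ (extChartAt (𝓡 2) x₀).symm) y) =
      Set.range (mfderiv (𝓡 2) 𝓘(ℝ, E3) ι ((extChartAt (𝓡 2) x₀).symm y) : F2 → E3) := by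
  set φ := extChartAt (𝓡 2) x₀ with hφ
  have hopen : IsOpen φ.target := isOpen_extChartAt_target x₀
  have hιd : ∀ x, MDifferentiableAt (𝓡 2) 𝓘(ℝ, E3) ι x := fun x =>
    hι.mdifferentiableAt (by simp)
  have hsrc : φ.symm y ∈ φ.source := φ.map_target hy
  have hsymm : MDifferentiableAt 𝓘(ℝ, F2) (𝓡 2) φ.symm y :=
    (mdifferentiableOn_extChartAt_symm y hy).mdifferentiableAt (hopen.mem_nhds hy)
  have hφd : MDifferentiableAt (𝓡 2) 𝓘(ℝ, F2) φ (φ.symm y) :=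
    mdifferentiableAt_extChartAt (by rwa [hφ, extChartAt_source] at hsrc)
  have h1 : fderiv ℝ (ι ∘ φ.symm) y =
      (mfderiv (𝓡 2) 𝓘(ℝ, E3) ι (φ.symm y)).comp (mfderiv 𝓘(ℝ, F2) (𝓡 2) φ.symm y) := by
    rw [← mfderiv_eq_fderiv]
    exact mfderiv_comp y (hιd _) hsymm
  have hj : MDifferentiableAt 𝓘(ℝ, F2) 𝓘(ℝ, E3) (ι ∘ φ.symm) (φ (φ.symm y)) := by
    rw [φ.right_inv hy]
    exact (hιd _).comp y hsymm
  have h2 : mfderiv (𝓡 2) 𝓘(ℝ, E3) ι (φ.symm y) =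
      (mfderiv 𝓘(ℝ, F2) 𝓘(ℝ, E3) (ι ∘ φ.symm) (φ (φ.symm y))).comp
        (mfderiv (𝓡 2) 𝓘(ℝ, F2) φ (φ.symm y)) := by
    rw [← mfderiv_comp (φ.symm y) hj hφd]
    refine Filter.EventuallyEq.mfderiv_eq ?_
    filter_upwards [extChartAt_source_mem_nhds' hsrc] with x hx
    simp only [Function.comp]
    rw [φ.left_inv hx]
  apply Set.Subset.antisymm
  · rintro _ ⟨w, rfl⟩
    rw [h1]
    exact ⟨mfderiv 𝓘(ℝ, F2) (𝓡 2) φ.symm y w, rfl⟩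
  · rintro _ ⟨w, rfl⟩
    rw [h2]
    rw [φ.right_inv hy, mfderiv_eq_fderiv]
    exact ⟨mfderiv (𝓡 2) 𝓘(ℝ, F2) φ (φ.symm y) w, rfl⟩

open Set Filter Topology in
theorem locParam_sphere {ι : S2 → E3}
    (hι : ContMDiff (𝓡 2) 𝓘(ℝ, E3) (⊤ : ℕ∞) ι)
    (hinj : Function.Injective ι)
    (himm : ∀ x, Function.Injective (mfderiv (𝓡 2) 𝓘(ℝ, E3) ι x)) (x₀ : S2) :
    LocParam F2 (Set.range ι) (tanSet ι) (ι x₀) := by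
  have hjC := contDiffOn_param hι x₀
  have hjr := range_fderiv_param hι x₀
  have hopen : IsOpen (extChartAt (𝓡 2) x₀).target := isOpen_extChartAt_target x₀
  have hder : fderiv ℝ (ι ∘ (extChartAt (𝓡 2) x₀).symm) (extChartAt (𝓡 2) x₀ x₀) =
      (mfderiv (𝓡 2) 𝓘(ℝ, E3) ι x₀ : F2 →L[ℝ] E3) := by
    have h := (hι.mdifferentiableAt (x := x₀) (by simp)).mfderiv
    rw [h]
    simp [writtenInExtChartAt, fderivWithin_univ]
    rfl
  have hx₀ : x₀ ∈ (extChartAt (𝓡 2) x₀).source := mem_extChartAt_source x₀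
  have hsrc : IsOpen (extChartAt (𝓡 2) x₀).source := isOpen_extChartAt_source x₀
  have hφc : ContinuousOn (extChartAt (𝓡 2) x₀) (extChartAt (𝓡 2) x₀).source :=
    continuousOn_extChartAt x₀
  set φ := extChartAt (𝓡 2) x₀ with hφ
  set j : F2 → E3 := ι ∘ φ.symm with hj
  set y₀ : F2 := φ x₀ with hy₀
  have hy₀t : y₀ ∈ φ.target := φ.map_source hx₀
  have hinj0 : Function.Injective (fderiv ℝ j y₀) := by
    rw [hder]; exact himm x₀
  obtain ⟨L₀, hL₀⟩ := (fderiv ℝ j y₀ : F2 →ₗ[ℝ] E3).exists_leftInverse_of_injective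
    (LinearMap.ker_eq_bot.2 hinj0)
  set L : E3 →L[ℝ] F2 := LinearMap.toContinuousLinearMap L₀ with hL
  have hjat : ContDiffAt ℝ 2 j y₀ := hjC.contDiffAt (hopen.mem_nhds hy₀t)
  have hg : ContDiffAt ℝ 2 (L ∘ j) y₀ := L.contDiff.contDiffAt.comp _ hjat
  have hg' : HasFDerivAt (L ∘ j) ((ContinuousLinearEquiv.refl ℝ F2 : F2 ≃L[ℝ] F2) : F2 →L[ℝ] F2) y₀ := by
    have h1 := L.hasFDerivAt.comp y₀ (hjat.differentiableAt (by norm_num)).hasFDerivAt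
    have h2 : L.comp (fderiv ℝ j y₀) =
        ((ContinuousLinearEquiv.refl ℝ F2 : F2 ≃L[ℝ] F2) : F2 →L[ℝ] F2) := by
      ext1 w
      exact congrArg (fun A : F2 →ₗ[ℝ] F2 => A w) hL₀
    rw [h2] at h1
    exact h1
  set G := hg.toOpenPartialHomeomorph (L ∘ j) hg' (by norm_num) with hG
  have hGc : ∀ y, G y = L (j y) := fun y => rfl
  have hGs : y₀ ∈ G.source := hg.mem_toOpenPartialHomeomorph_source hg' (by norm_num)
  have hGinv : ContDiffAt ℝ 2 G.symm (G y₀) := hg.to_localInverse hg' (by norm_num)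
  have hev : ∀ᶠ z in 𝓝 (G y₀), ContDiffAt ℝ 2 G.symm z := hGinv.eventually (by simp)
  obtain ⟨W, hWsub, hWo, hWm⟩ := _root_.mem_nhds_iff.1 hev
  -- the first domain
  have hΩ0 : IsOpen (φ.target ∩ (G.source ∩ G ⁻¹' W)) :=
    hopen.inter (G.isOpen_inter_preimage hWo)
  set Ω0 := φ.target ∩ (G.source ∩ G ⁻¹' W) with hΩ0d
  have hemb : Topology.IsClosedEmbedding ι := hι.continuous.isClosedEmbedding hinj
  have hnb : φ.source ∩ φ ⁻¹' Ω0 ∈ 𝓝 x₀ :=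
    (hφc.isOpen_inter_preimage hsrc hΩ0).mem_nhds ⟨hx₀, hy₀t, hGs, hWm⟩
  rw [hemb.isInducing.nhds_eq_comap, mem_comap] at hnb
  obtain ⟨U', hU', hU'sub⟩ := hnb
  obtain ⟨U0, hU0sub, hU0o, hU0m⟩ := _root_.mem_nhds_iff.1 hU'
  have hjφ : ∀ x ∈ φ.source, j (φ x) = ι x := fun x hx => by
    simp only [hj, Function.comp]; rw [φ.left_inv hx]
  have hΩ : IsOpen (Ω0 ∩ j ⁻¹' U0) :=
    (hjC.continuousOn.mono (fun y hy => hy.1)).isOpen_inter_preimage hΩ0 hU0o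
  set Ω := Ω0 ∩ j ⁻¹' U0 with hΩd
  have hZ : IsOpen (W ∩ (G.target ∩ G.symm ⁻¹' Ω)) :=
    hWo.inter (G.symm.isOpen_inter_preimage hΩ)
  set Z := W ∩ (G.target ∩ G.symm ⁻¹' Ω) with hZd
  have hLj : ∀ y ∈ Ω, L (j y) ∈ Z := by
    intro y hy
    refine ⟨hy.1.2.2, G.map_source hy.1.2.1, ?_⟩
    change G.symm (G y) ∈ Ω
    rw [G.left_inv hy.1.2.1]
    exact hy
  refine ⟨U0 ∩ L ⁻¹' Z, Ω, fun q => G.symm (L q), j, hU0o.inter (hZ.preimage L.continuous),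
    ⟨hU0m, ?_⟩, hΩ, ?_, hjC.mono fun y hy => hy.1.1, ?_, ?_, ?_, ?_, ?_⟩
  · have := hLj y₀ ⟨⟨hy₀t, hGs, hWm⟩, by rw [mem_preimage, hjφ x₀ hx₀]; exact hU0m⟩
    rwa [hjφ x₀ hx₀] at this
  · intro q hq
    have h1 : ContDiffAt ℝ 2 G.symm (L q) := hWsub hq.2.1
    exact (ContDiffAt.comp q h1 L.contDiff.contDiffAt).contDiffWithinAt
  · intro q hq
    exact hq.2.2.2
  · intro y hy
    exact ⟨⟨φ.symm y, rfl⟩, hy.2, hLj y hy⟩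
  · intro y hy
    exact G.left_inv hy.1.2.1
  · rintro q ⟨⟨x, rfl⟩, hq⟩
    have hx : x ∈ φ.source ∩ φ ⁻¹' Ω0 := hU'sub (hU0sub hq.1)
    have : G.symm (L (ι x)) = φ x := by
      rw [← hjφ x hx.1]
      exact G.left_inv hx.2.2.1
    simp only
    rw [this, hjφ x hx.1]
  · intro y hy
    rw [hjr y hy.1.1, ← tanSet_apply hinj]
    rfl

/-- Let `ι : S² → ℝ³` be a smooth embedding of the unit sphere, `π : ℝ³ → ℝ` the
projection onto the last coordinate, and `f = π ∘ ι`. If `f` has no critical values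
in `[a, b]`, then there is a bijection between the connected components of the
subspace `π⁻¹ {a} \ ι(S²)` and the connected components of `π⁻¹ {b} \ ι(S²)`
(the nesting posets `N_a` and `N_b` are isomorphic). -/
theorem components_of_slices_equiv_of_no_critical_values
    (π : EuclideanSpace ℝ (Fin 3) → ℝ) (hπ : ∀ x, π x = x 2)
    (ι : (sphere (0 : EuclideanSpace ℝ (Fin 3)) 1 : Set (EuclideanSpace ℝ (Fin 3))) →
        EuclideanSpace ℝ (Fin 3))
    (hι : ContMDiff (𝓡 2) 𝓘(ℝ, EuclideanSpace ℝ (Fin 3)) (⊤ : ℕ∞) ι)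
    (hinj : Function.Injective ι)
    (himm : ∀ x, Function.Injective (mfderiv (𝓡 2) 𝓘(ℝ, EuclideanSpace ℝ (Fin 3)) ι x))
    (f : (sphere (0 : EuclideanSpace ℝ (Fin 3)) 1 : Set (EuclideanSpace ℝ (Fin 3))) → ℝ)
    (hf : f = π ∘ ι)
    (a b : ℝ) (hab : a ≤ b)
    (hreg : ∀ x, f x ∈ Set.Icc a b → mfderiv (𝓡 2) 𝓘(ℝ, ℝ) f x ≠ 0) :
    Nonempty (ConnectedComponents (π ⁻¹' {a} \ Set.range ι : Set (EuclideanSpace ℝ (Fin 3))) ≃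
      ConnectedComponents (π ⁻¹' {b} \ Set.range ι : Set (EuclideanSpace ℝ (Fin 3)))) := by
  have hπ' : π = (EuclideanSpace.proj (2 : Fin 3) : E3 →L[ℝ] ℝ) := by
    funext x
    rw [hπ]; rfl
  subst hπ'
  have hcomp : IsCompact (Set.range ι) := isCompact_range hι.continuous
  obtain ⟨h⟩ := slices_homeo (F := F2) (M := Set.range ι) (T := tanSet ι) hcomp
    (by rintro _ ⟨x, rfl⟩; exact locParam_sphere hι hinj himm x)
    (convex_tanSet hinj) (EuclideanSpace.proj (2 : Fin 3) : E3 →L[ℝ] ℝ)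
    (EuclideanSpace.single 2 1) (by simp) hab (by
      rintro _ ⟨x, rfl⟩ hx
      have h1 := hreg x (by rw [hf]; exact hx)
      by_contra! hcon
      apply h1
      have h2 : mfderiv (𝓡 2) 𝓘(ℝ, ℝ) f x =
          ((EuclideanSpace.proj (2 : Fin 3) : E3 →L[ℝ] ℝ)).comp
            (mfderiv (𝓡 2) 𝓘(ℝ, E3) ι x : F2 →L[ℝ] E3) := by
        rw [hf]
        rw [mfderiv_comp x (I' := 𝓘(ℝ, E3))
          (EuclideanSpace.proj (2 : Fin 3) : E3 →L[ℝ] ℝ).mdifferentiableAt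
          (hι.mdifferentiableAt (by simp)), ContinuousLinearMap.mfderiv_eq]
        rfl
      rw [h2]
      ext1 w
      exact hcon _ ⟨x, rfl, w, rfl⟩)
  exact components_equiv_of_homeo h
end
end
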